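/- arXiv:2601.18590 — 2 statements merged into one kernel-verified Lean document; each statement's English description precedes it below -/
import Mathlib

section
/- Let q be a prime power and let δ ∈ (0, 1 − 1/q²) be a constant. Then there exist constants c > 0, c' > 0 and c'' > 0 such that for all sufficiently large n the following holds with d − 1 = ⌊δn⌋ and ℓ = ⌊c''√n⌋: among all ℓ-tuples (u_1, …, u_ℓ) of vectors in B_q^S(2n, d−1) that are linearly independent over 𝔽_q and pairwise symplectically orthogonal (⟨u_i, u_j⟩_S = 0 for all i, j), the number of tuples for which the two-sided estimate ((1 − q^{−cn})/q^ℓ) · Vol_q^S(2n, d−1) ≤ |B_q^S(2n, d−1) ∩ {v : ⟨u_1,v⟩_S = 0} ∩ ⋯ ∩ {v : ⟨u_ℓ,v⟩_S = 0}| ≤ ((1 + q^{−cn})/q^ℓ) · Vol_q^S(2n, d−1) fails is at most a q^{−c'n} fraction of the total number of such linearly independent pairwise symplectically orthogonal ℓ-tuples. -/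
open Finset
open scoped Classical

/-- Symplectic weight of a vector in `F^{2n}`, written as `Fin n → F × F`. -/
noncomputable def sympWt {F : Type} [Zero F] [DecidableEq F] {n : ℕ} (u : Fin n → F × F) : ℕ :=
  hammingNorm u

/-- The symplectic inner product on `F^{2n}`: `⟨(a|b),(a'|b')⟩_S = ⟨a,b'⟩ - ⟨b,a'⟩`. -/
def sympInner {F : Type} [Field F] {n : ℕ} (u v : Fin n → F × F) : F :=
  ∑ i, ((u i).1 * (v i).2 - (u i).2 * (v i).1)

/-- The symplectic ball `B_q^S(2n, r)` of radius `r`. -/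
noncomputable def sympBall (F : Type) [Fintype F] [Zero F] [DecidableEq F] (n r : ℕ) :
    Finset (Fin n → F × F) :=
  Finset.univ.filter fun x => sympWt x ≤ r

/-- `Vol_q^S(2n, r) = ∑_{i=0}^{r} C(n,i)(q²-1)^i`, the volume of the symplectic ball. -/
def volS (q n r : ℕ) : ℕ :=
  ∑ i ∈ Finset.range (r + 1), n.choose i * (q ^ 2 - 1) ^ i

theorem addChar_sum {F ι : Type} [AddCommMonoid F] (ψ : AddChar F ℂ) (f : ι → F) (s : Finset ι) :
    ψ (∑ i ∈ s, f i) = ∏ i ∈ s, ψ (f i) := by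
  induction s using Finset.induction_on with
  | empty => simp
  | insert a s ha ih => rw [Finset.sum_insert ha, Finset.prod_insert ha, AddChar.map_add_eq_mul, ih]

theorem ball_sum {F : Type} [Field F] [Fintype F] [DecidableEq F] {n r : ℕ}
    (g : Fin n → F × F → ℂ) (h0 : ∀ i, g i 0 = 1) :
    ∑ v ∈ sympBall F n r, ∏ i, g i (v i) =
      ∑ S ∈ (Finset.univ : Finset (Finset (Fin n))).filter (fun S => S.card ≤ r),
        ∏ i ∈ S, ∑ x ∈ (Finset.univ.erase (0 : F × F)), g i x := by
  rw [← Finset.sum_fiberwise_of_maps_to (s := sympBall F n r)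
    (g := fun v => (Finset.univ.filter (fun i => v i ≠ 0)))
    (t := (Finset.univ : Finset (Finset (Fin n))).filter (fun S => S.card ≤ r))]
  · apply Finset.sum_congr rfl
    intro S hS
    have hS' : S.card ≤ r := by simpa using hS
    have : (sympBall F n r).filter (fun v => Finset.univ.filter (fun i => v i ≠ 0) = S) =
        Fintype.piFinset (fun i => if i ∈ S then Finset.univ.erase (0 : F × F) else {0}) := by
      ext v
      simp only [sympBall, Finset.mem_filter, Finset.mem_univ, true_and, Fintype.mem_piFinset]
      constructor
      · rintro ⟨-, rfl⟩ i
        by_cases h : v i = 0 <;> simp [h]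
      · intro h
        have h2 : Finset.univ.filter (fun i => v i ≠ 0) = S := by
          ext i
          have := h i
          by_cases hi : i ∈ S <;> simp_all
        refine ⟨?_, h2⟩
        unfold sympWt hammingNorm
        rw [← h2] at hS'
        convert hS'
    rw [this, ← Finset.prod_univ_sum]
    rw [← Finset.prod_subset (Finset.subset_univ S)]
    · apply Finset.prod_congr rfl
      intro i hi
      simp [hi]
    · intro i _ hi
      simp [hi, h0]
  · intro v hv
    simp only [sympBall, Finset.mem_filter, Finset.mem_univ, true_and] at hv ⊢
    unfold sympWt hammingNorm at hv
    convert hv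

theorem card_erase {F : Type} [Field F] [Fintype F] [DecidableEq F] :
    (Finset.univ.erase (0 : F × F)).card = Fintype.card F ^ 2 - 1 := by
  rw [Finset.card_erase_of_mem (Finset.mem_univ _)]
  simp [sq]

theorem ball_card {F : Type} [Field F] [Fintype F] [DecidableEq F] {n r : ℕ} :
    (sympBall F n r).card = volS (Fintype.card F) n r := by
  have h := ball_sum (F := F) (n := n) (r := r) (fun _ _ => 1) (fun _ => rfl)
  simp only [Finset.prod_const_one, Finset.sum_const, card_erase, nsmul_eq_mul, mul_one,
    Finset.prod_const] at h
  have h3 : ((∑ S ∈ (Finset.univ : Finset (Finset (Fin n))).filter (fun S => S.card ≤ r),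
      (Fintype.card F ^ 2 - 1) ^ S.card : ℕ)) = volS (Fintype.card F) n r := by
    rw [← Finset.sum_fiberwise_of_maps_to (g := Finset.card) (t := Finset.range (r+1))]
    · unfold volS
      apply Finset.sum_congr rfl
      intro j hj
      have : ((Finset.univ : Finset (Finset (Fin n))).filter (fun S => S.card ≤ r)).filter
          (fun S => S.card = j) = Finset.powersetCard j Finset.univ := by
        ext S
        simp [Finset.mem_powersetCard] at hj ⊢
        omega
      rw [this, Finset.sum_congr rfl (g := fun _ => (Fintype.card F ^ 2 - 1) ^ j)]
      · simp
      · intro S hS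
        rw [(Finset.mem_powersetCard.1 hS).2]
    · intro S hS
      simp at hS ⊢
      omega
  rw [← h3]
  exact_mod_cast h

theorem local_sum {F : Type} [Field F] [Fintype F] [DecidableEq F]
    (ψ : AddChar F ℂ) (hψ : ψ.IsPrimitive) (w : F × F) :
    ‖∑ x ∈ Finset.univ.erase (0 : F × F), ψ (w.1 * x.2 - w.2 * x.1)‖ =
      if w = 0 then (Fintype.card F : ℝ) ^ 2 - 1 else 1 := by
  have hq : 1 ≤ Fintype.card F ^ 2 := Nat.one_le_pow _ _ Fintype.card_pos
  split_ifs with h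
  · subst h
    simp only [Prod.fst_zero, Prod.snd_zero, zero_mul, sub_zero, AddChar.map_zero_eq_one,
      Finset.sum_const, card_erase, nsmul_eq_mul, mul_one]
    rw [Complex.norm_natCast, Nat.cast_sub hq]
    push_cast
    rfl
  · have h1 : ∑ x : F × F, ψ (w.1 * x.2 - w.2 * x.1) = 0 := by
      have h2 : ∀ x : F × F, ψ (w.1 * x.2 - w.2 * x.1) = ψ (x.1 * (-w.2)) * ψ (x.2 * w.1) := by
        intro x
        rw [← AddChar.map_add_eq_mul]
        congr 1
        ring
      simp_rw [h2]
      rw [Fintype.sum_prod_type]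
      simp_rw [← Finset.mul_sum]
      rw [← Finset.sum_mul, AddChar.sum_mulShift _ hψ, AddChar.sum_mulShift _ hψ]
      by_contra h3
      apply h
      ext <;> by_contra h4 <;> simp_all
    have h5 := Finset.add_sum_erase Finset.univ (fun x : F × F => ψ (w.1 * x.2 - w.2 * x.1))
      (Finset.mem_univ 0)
    rw [h1] at h5
    simp only [Prod.fst_zero, Prod.snd_zero, mul_zero, sub_zero, AddChar.map_zero_eq_one] at h5
    rw [eq_neg_of_add_eq_zero_right h5]
    simp

theorem ball_hat {F : Type} [Field F] [Fintype F] [DecidableEq F] {n r : ℕ}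
    (ψ : AddChar F ℂ) (hψ : ψ.IsPrimitive) (w : Fin n → F × F) :
    ‖∑ v ∈ sympBall F n r, ψ (sympInner w v)‖ ≤
      ∑ S ∈ (Finset.univ : Finset (Finset (Fin n))).filter (fun S => S.card ≤ r),
        ∏ i ∈ S, (if w i = 0 then (Fintype.card F : ℝ) ^ 2 - 1 else 1) := by
  have h : ∀ v, ψ (sympInner w v) = ∏ i, ψ ((w i).1 * (v i).2 - (w i).2 * (v i).1) := by
    intro v
    unfold sympInner
    exact addChar_sum ψ _ _
  simp_rw [h]
  rw [ball_sum (fun i x => ψ ((w i).1 * x.2 - (w i).2 * x.1)) (by simp)]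
  refine (norm_sum_le _ _).trans (Finset.sum_le_sum fun S _ => ?_)
  rw [norm_prod]
  simp_rw [local_sum ψ hψ]
  exact le_rfl

theorem supp_gf {n r : ℕ} (c : Fin n → ℝ) (hc : ∀ i, 0 ≤ c i) (t : ℝ) (ht : 0 < t) (ht1 : t ≤ 1) :
    t ^ r * ∑ S ∈ (Finset.univ : Finset (Finset (Fin n))).filter (fun S => S.card ≤ r),
        ∏ i ∈ S, c i ≤ ∏ i, (1 + t * c i) := by
  rw [Finset.prod_one_add, Finset.mul_sum, Finset.powerset_univ]
  refine (Finset.sum_le_sum fun S hS => ?_).trans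
    (Finset.sum_le_sum_of_subset_of_nonneg (Finset.filter_subset _ _) fun S _ _ =>
      Finset.prod_nonneg fun i _ => mul_nonneg ht.le (hc i))
  rw [Finset.prod_mul_distrib, Finset.prod_const]
  have : S.card ≤ r := by simpa using hS
  exact mul_le_mul_of_nonneg_right (pow_le_pow_of_le_one ht.le ht1 this)
    (Finset.prod_nonneg fun i _ => hc i)

theorem prod_wt {F : Type} [Field F] [DecidableEq F] {n : ℕ}
    (w : Fin n → F × F) (A B : ℝ) :
    ∏ i, (if w i = 0 then A else B) = A ^ (n - sympWt w) * B ^ (sympWt w) := by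
  rw [Finset.prod_ite, Finset.prod_const, Finset.prod_const]
  have h := Finset.card_filter_add_card_filter_not (s := (Finset.univ : Finset (Fin n))) (fun i => w i = 0)
  have h2 : (Finset.univ.filter (fun i => ¬ w i = 0)).card = sympWt w := by
    unfold sympWt hammingNorm; congr
  rw [h2] at h ⊢
  congr 2
  simp at h
  omega

theorem mode_step {n r : ℕ} (hr : r < n) (j : ℕ) (hj : j ≤ n) :
    ((n.choose (j+1) : ℝ) * ((r : ℝ) / ((n : ℝ) - r)) ^ (j+1)) * ((j + 1) * ((n:ℝ) - r)) =
      ((n.choose j : ℝ) * ((r : ℝ) / ((n : ℝ) - r)) ^ j) * (((n:ℝ) - j) * r) := by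
  have h := Nat.choose_succ_right_eq n j
  have h2 : (n.choose (j+1) : ℝ) * (j + 1) = n.choose j * ((n:ℝ) - j) := by
    rw [← Nat.cast_sub hj]; exact_mod_cast h
  have h3 : (n : ℝ) - r ≠ 0 := by
    have : (r : ℝ) < n := by exact_mod_cast hr
    linarith
  rw [pow_succ]
  calc _ = ((n.choose (j+1) : ℝ) * (j + 1)) * ((r : ℝ) / ((n : ℝ) - r)) ^ j *
        ((r : ℝ) / ((n : ℝ) - r) * ((n : ℝ) - r)) := by ring
    _ = _ := by rw [h2, div_mul_cancel₀ _ h3]; ring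

theorem mode_bound {n r : ℕ} (hr : r < n) (j : ℕ) (hj : j ≤ n) :
    (n.choose j : ℝ) * ((r : ℝ) / ((n : ℝ) - r)) ^ j ≤
      (n.choose r : ℝ) * ((r : ℝ) / ((n : ℝ) - r)) ^ r := by
  have hrn : (r : ℝ) < n := by exact_mod_cast hr
  have hpos : 0 < (n : ℝ) - r := by linarith
  have hx : 0 ≤ (r : ℝ) / ((n : ℝ) - r) := by positivity
  have hr0 : (0 : ℝ) ≤ r := by positivity
  rcases le_total j r with h | h
  · induction h using Nat.decreasingInduction with
    | self => exact le_rfl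
    | of_succ k hk ih =>
      refine le_trans ?_ (ih (by omega))
      have hkr : (k : ℝ) + 1 ≤ r := by exact_mod_cast hk
      have hk0 : (0 : ℝ) ≤ k := by positivity
      have hs := mode_step hr k hj
      have hA : 0 ≤ (n.choose k : ℝ) * ((r : ℝ) / ((n : ℝ) - r)) ^ k := by positivity
      have hle : (((k : ℝ) + 1) * ((n:ℝ) - r)) ≤ (((n:ℝ) - k) * r) := by nlinarith
      have hp : 0 < (((k : ℝ) + 1) * ((n:ℝ) - r)) := by positivity
      refine le_of_mul_le_mul_right ?_ hp
      rw [hs]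
      exact mul_le_mul_of_nonneg_left hle hA
  · induction h using Nat.leRec with
    | refl => exact le_rfl
    | le_succ_of_le hk ih =>
      rename_i k
      refine le_trans ?_ (ih (by omega))
      have hkr : (r : ℝ) ≤ k := by exact_mod_cast hk
      have hk0 : (0 : ℝ) ≤ k := by positivity
      have hs := mode_step hr k (by omega)
      have hA : 0 ≤ (n.choose k : ℝ) * ((r : ℝ) / ((n : ℝ) - r)) ^ k := by positivity
      have hle : (((n:ℝ) - k) * r) ≤ (((k : ℝ) + 1) * ((n:ℝ) - r)) := by nlinarith
      have hp : 0 < (((k : ℝ) + 1) * ((n:ℝ) - r)) := by positivity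
      refine le_of_mul_le_mul_right ?_ hp
      rw [hs]
      exact mul_le_mul_of_nonneg_left hle hA

theorem mode_total {n r : ℕ} (hr : r < n) :
    (1 + (r : ℝ) / ((n : ℝ) - r)) ^ n ≤
      ((n : ℝ) + 1) * ((n.choose r : ℝ) * ((r : ℝ) / ((n : ℝ) - r)) ^ r) := by
  rw [add_comm, add_pow]
  refine (Finset.sum_le_card_nsmul _ _ ((n.choose r : ℝ) * ((r : ℝ) / ((n : ℝ) - r)) ^ r) ?_).trans ?_
  · intro j hj
    rw [one_pow, mul_one, mul_comm]
    exact mode_bound hr j (by simp at hj; omega)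
  · simp

theorem heavy_bound {F : Type} [Field F] [Fintype F] [DecidableEq F] {n r : ℕ}
    (ψ : AddChar F ℂ) (hψ : ψ.IsPrimitive) (w : Fin n → F × F) (ρ : ℝ) (hr : r < n)
    (Q t : ℝ) (hQ : Q = (Fintype.card F : ℝ) ^ 2 - 1) (hQ0 : 0 < Q)
    (ht : Q * t = (r : ℝ) / ((n : ℝ) - r)) (ht0 : 0 < t) (ht1 : t ≤ 1)
    (hρ : 1 + t ≤ ρ * (1 + Q * t)) :
    ‖∑ v ∈ sympBall F n r, ψ (sympInner w v)‖ ≤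
      ((n : ℝ) + 1) * ρ ^ (sympWt w) * (volS (Fintype.card F) n r : ℝ) := by
  have hD : 0 < 1 + Q * t := by positivity
  have hw : sympWt w ≤ n := by
    have := hammingNorm_le_card_fintype (x := w)
    simpa [sympWt] using this
  have h1 := ball_hat (r := r) ψ hψ w
  rw [← hQ] at h1
  have h2 := supp_gf (r := r) (fun i => if w i = 0 then Q else 1)
    (fun i => by split_ifs <;> linarith) t ht0 ht1
  have h3 : ∏ i, (1 + t * (if w i = 0 then Q else 1)) =
      (1 + Q * t) ^ (n - sympWt w) * (1 + t) ^ (sympWt w) := by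
    rw [← prod_wt]
    apply Finset.prod_congr rfl
    intro i _
    split_ifs <;> ring
  rw [h3] at h2
  have hρ0 : 0 ≤ ρ := by
    by_contra h
    push Not at h
    nlinarith
  have h4 : (1 + Q * t) ^ (n - sympWt w) * (1 + t) ^ (sympWt w) ≤ ρ ^ sympWt w * (1 + Q * t) ^ n := by
    calc _ ≤ (1 + Q * t) ^ (n - sympWt w) * (ρ * (1 + Q * t)) ^ (sympWt w) := by gcongr
      _ = ρ ^ sympWt w * ((1 + Q * t) ^ (n - sympWt w) * (1 + Q * t) ^ (sympWt w)) := by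
        rw [mul_pow]; ring
      _ = _ := by rw [← pow_add, Nat.sub_add_cancel hw]
  have h5 : (1 + Q * t) ^ n ≤ ((n : ℝ) + 1) * ((n.choose r : ℝ) * (Q * t) ^ r) := by
    rw [ht]; exact mode_total hr
  have h6 : (n.choose r : ℝ) * Q ^ r ≤ (volS (Fintype.card F) n r : ℝ) := by
    have hq : 1 ≤ Fintype.card F ^ 2 := Nat.one_le_pow _ _ Fintype.card_pos
    have : n.choose r * (Fintype.card F ^ 2 - 1) ^ r ≤ volS (Fintype.card F) n r := by
      unfold volS
      exact Finset.single_le_sum (f := fun i => n.choose i * (Fintype.card F ^ 2 - 1) ^ i)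
        (fun _ _ => Nat.zero_le _) (by simp)
    have h7 : ((n.choose r * (Fintype.card F ^ 2 - 1) ^ r : ℕ) : ℝ) ≤ volS (Fintype.card F) n r := by
      exact_mod_cast this
    rw [Nat.cast_mul, Nat.cast_pow, Nat.cast_sub hq] at h7
    push_cast at h7
    rw [hQ]
    exact h7
  have htr : 0 < t ^ r := by positivity
  refine le_of_mul_le_mul_left ?_ htr
  calc _ ≤ _ := mul_le_mul_of_nonneg_left h1 htr.le
    _ ≤ _ := h2
    _ ≤ _ := h4
    _ ≤ ρ ^ sympWt w * (((n : ℝ) + 1) * ((n.choose r : ℝ) * (Q * t) ^ r)) := by gcongr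
    _ = ρ ^ sympWt w * (((n : ℝ) + 1) * (((n.choose r : ℝ) * Q ^ r) * t ^ r)) := by
      rw [mul_pow]; ring
    _ ≤ ρ ^ sympWt w * (((n : ℝ) + 1) * ((volS (Fintype.card F) n r : ℝ) * t ^ r)) := by gcongr
    _ = _ := by ring

theorem sympInner_comb {F : Type} [Field F] {n ℓ : ℕ} (a : Fin ℓ → F) (u : Fin ℓ → Fin n → F × F)
    (v : Fin n → F × F) : sympInner (∑ i, a i • u i) v = ∑ i, a i * sympInner (u i) v := by
  unfold sympInner
  simp_rw [Finset.mul_sum]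
  rw [Finset.sum_comm]
  apply Finset.sum_congr rfl
  intro j _
  simp only [Finset.sum_apply, Prod.fst_sum, Prod.snd_sum, Pi.smul_apply, Prod.smul_fst,
    Prod.smul_snd, smul_eq_mul, Finset.sum_mul]
  rw [← Finset.sum_sub_distrib]
  apply Finset.sum_congr rfl
  intro i _
  ring

theorem sympInner_sub {F : Type} [Field F] {n : ℕ} (u x y : Fin n → F × F) :
    sympInner u (x - y) = sympInner u x - sympInner u y := by
  unfold sympInner
  rw [← Finset.sum_sub_distrib]
  apply Finset.sum_congr rfl
  intro i _
  simp
  ring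

theorem sympInner_anti {F : Type} [Field F] {n : ℕ} (u x : Fin n → F × F) :
    sympInner x u = - sympInner u x := by
  unfold sympInner
  rw [← Finset.sum_neg_distrib]
  apply Finset.sum_congr rfl
  intro i _
  ring

theorem sympInner_self {F : Type} [Field F] {n : ℕ} (u : Fin n → F × F) :
    sympInner u u = 0 := by
  unfold sympInner
  apply Finset.sum_eq_zero
  intro i _
  ring

theorem fourier_count {F : Type} [Field F] [Fintype F] [DecidableEq F] {n r ℓ : ℕ}
    (ψ : AddChar F ℂ) (hψ : ψ.IsPrimitive) (u : Fin ℓ → Fin n → F × F) :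
    (Fintype.card F : ℂ) ^ ℓ *
      (((sympBall F n r).filter fun v => ∀ i, sympInner (u i) v = 0).card : ℂ) =
    ∑ a : Fin ℓ → F, ∑ v ∈ sympBall F n r, ψ (sympInner (∑ i, a i • u i) v) := by
  rw [Finset.sum_comm, Finset.card_filter, Nat.cast_sum, Finset.mul_sum]
  apply Finset.sum_congr rfl
  intro v _
  have h : ∀ a : Fin ℓ → F, ψ (sympInner (∑ i, a i • u i) v) =
      ∏ i, ψ (a i * sympInner (u i) v) := by
    intro a
    rw [sympInner_comb, addChar_sum]
  simp_rw [h]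
  have h2 := Finset.prod_univ_sum (fun _ : Fin ℓ => (Finset.univ : Finset F))
    (fun i x => ψ (x * sympInner (u i) v))
  rw [Fintype.piFinset_univ] at h2
  rw [← h2]
  simp_rw [AddChar.sum_mulShift _ hψ]
  by_cases h3 : ∀ i, sympInner (u i) v = 0
  · simp [h3]
  · rw [if_neg h3]
    push Not at h3
    obtain ⟨i, hi⟩ := h3
    rw [Finset.prod_eq_zero (Finset.mem_univ i)]
    · simp
    · simp [hi]

theorem fourier_est {F : Type} [Field F] [Fintype F] [DecidableEq F] {n r ℓ : ℕ}
    (ψ : AddChar F ℂ) (hψ : ψ.IsPrimitive) (u : Fin ℓ → Fin n → F × F) (E : ℝ) (hE : 0 ≤ E)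
    (h : ∀ a : Fin ℓ → F, a ≠ 0 →
      ‖∑ v ∈ sympBall F n r, ψ (sympInner (∑ i, a i • u i) v)‖ ≤ E) :
    |(Fintype.card F : ℝ) ^ ℓ *
      (((sympBall F n r).filter fun v => ∀ i, sympInner (u i) v = 0).card : ℝ) -
        (volS (Fintype.card F) n r : ℝ)| ≤ (Fintype.card F : ℝ) ^ ℓ * E := by
  have h1 := fourier_count (r := r) ψ hψ u
  rw [← Finset.add_sum_erase _ _ (Finset.mem_univ 0)] at h1
  have h0 : ∑ v ∈ sympBall F n r, ψ (sympInner (∑ i, (0 : Fin ℓ → F) i • u i) v) =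
      (volS (Fintype.card F) n r : ℂ) := by
    simp_rw [sympInner_comb]
    simp [ball_card]
  rw [h0] at h1
  have h2 : (((Fintype.card F : ℝ) ^ ℓ *
      (((sympBall F n r).filter fun v => ∀ i, sympInner (u i) v = 0).card : ℝ) -
        (volS (Fintype.card F) n r : ℝ) : ℝ) : ℂ) = ∑ a ∈ Finset.univ.erase (0 : Fin ℓ → F),
          ∑ v ∈ sympBall F n r, ψ (sympInner (∑ i, a i • u i) v) := by
    push_cast
    rw [h1]
    ring
  rw [← Real.norm_eq_abs, ← Complex.norm_real, h2]
  refine (norm_sum_le _ _).trans ((Finset.sum_le_card_nsmul _ _ E ?_).trans ?_)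
  · intro a ha
    exact h a (Finset.ne_of_mem_erase ha)
  · rw [nsmul_eq_mul]
    apply mul_le_mul_of_nonneg_right _ hE
    have : (Finset.univ.erase (0 : Fin ℓ → F)).card ≤ Fintype.card F ^ ℓ := by
      refine (Finset.card_erase_le).trans ?_
      simp
    exact_mod_cast this

/-- good tuples -/
def IsGood {F : Type} [Field F] [Fintype F] [DecidableEq F] {n ℓ : ℕ} (r : ℕ)
    (u : Fin ℓ → Fin n → F × F) : Prop :=
  (∀ i, u i ∈ sympBall F n r) ∧ LinearIndependent F u ∧ ∀ i j, sympInner (u i) (u j) = 0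

noncomputable def goodSet (F : Type) [Field F] [Fintype F] [DecidableEq F] (n r ℓ : ℕ) :
    Finset (Fin ℓ → Fin n → F × F) := Finset.univ.filter fun u => IsGood r u

theorem bad_count {F : Type} [Field F] [Fintype F] [DecidableEq F] {n r K m : ℕ} :
    ((goodSet F n r (m+1)).filter fun u => ∃ a : Fin (m+1) → F, a ≠ 0 ∧
      sympWt (∑ i, a i • u i) ≤ K).card ≤
      Fintype.card F ^ (m+1) * (volS (Fintype.card F) n K * (goodSet F n r m).card) := by
  have hj : ∀ a : Fin (m+1) → F, ∃ j, a ≠ 0 → a j ≠ 0 := by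
    intro a
    by_cases h : a = 0
    · exact ⟨0, fun h' => absurd h h'⟩
    · obtain ⟨j, hj⟩ := Function.ne_iff.1 h
      exact ⟨j, fun _ => hj⟩
  choose j hj using hj
  have ha : ∀ u : Fin (m+1) → Fin n → F × F, ∃ a : Fin (m+1) → F,
      (∃ a : Fin (m+1) → F, a ≠ 0 ∧ sympWt (∑ i, a i • u i) ≤ K) →
        (a ≠ 0 ∧ sympWt (∑ i, a i • u i) ≤ K) := by
    intro u
    by_cases h : ∃ a : Fin (m+1) → F, a ≠ 0 ∧ sympWt (∑ i, a i • u i) ≤ K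
    · obtain ⟨a, ha⟩ := h
      exact ⟨a, fun _ => ha⟩
    · exact ⟨0, fun h' => absurd h' h⟩
  choose a ha using ha
  have hcard : Fintype.card F ^ (m+1) * (volS (Fintype.card F) n K * (goodSet F n r m).card) =
      ((Finset.univ : Finset (Fin (m+1) → F)) ×ˢ (sympBall F n K ×ˢ goodSet F n r m)).card := by
    rw [Finset.card_product, Finset.card_product, ball_card]
    simp
  rw [hcard]
  apply Finset.card_le_card_of_injOn
    (fun u => (a u, (∑ i, a u i • u i, (j (a u)).removeNth u)))
  · intro u hu
    rw [Finset.mem_coe, Finset.mem_filter] at hu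
    obtain ⟨hg, hb⟩ := hu
    have hb' := ha u hb
    have hg' : IsGood r u := by simpa [goodSet] using hg
    rw [Finset.mem_coe, Finset.mem_product, Finset.mem_product]
    refine ⟨Finset.mem_univ _, ?_, ?_⟩
    · simpa [sympBall] using hb'.2
    · simp only [goodSet, Finset.mem_filter, Finset.mem_univ, true_and]
      refine ⟨fun i => hg'.1 _, ?_, fun i k => hg'.2.2 _ _⟩
      exact hg'.2.1.comp _ (Fin.succAbove_right_injective)
  · intro u hu u' hu' heq
    rw [Finset.mem_coe, Finset.mem_filter] at hu hu'
    have hb := (ha u hu.2).1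
    simp only [Prod.mk.injEq] at heq
    obtain ⟨h1, h2, h3⟩ := heq
    rw [← h1] at h2 h3
    have hne := hj _ hb
    rw [Fin.sum_univ_succAbove _ (j (a u)), Fin.sum_univ_succAbove _ (j (a u))] at h2
    have h4 : ∀ i, u ((j (a u)).succAbove i) = u' ((j (a u)).succAbove i) := fun i => congrFun h3 i
    simp_rw [h4] at h2
    have h5 := add_right_cancel h2
    have h6 : u (j (a u)) = u' (j (a u)) := smul_right_injective _ hne h5
    funext i
    rcases Fin.eq_self_or_eq_succAbove (j (a u)) i with h | ⟨k, h⟩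
    · rw [h]; exact h6
    · rw [h]; exact h4 k

theorem pigeon {F : Type} [Field F] [Fintype F] [DecidableEq F] {n r m : ℕ}
    (u : Fin m → Fin n → F × F) :
    volS (Fintype.card F) n (r/2) ≤
      ((sympBall F n r).filter fun v => ∀ i, sympInner (u i) v = 0).card * Fintype.card F ^ m := by
  rw [← ball_card]
  have h := Finset.card_le_mul_card_image_of_maps_to (s := sympBall F n (r/2))
    (t := (Finset.univ : Finset (Fin m → F)))
    (f := fun v i => sympInner (u i) v) (fun _ _ => Finset.mem_univ _)
    ((sympBall F n r).filter fun v => ∀ i, sympInner (u i) v = 0).card ?_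
  · simpa using h
  · intro y _
    rcases Finset.eq_empty_or_nonempty
      ((sympBall F n (r/2)).filter fun v => (fun i => sympInner (u i) v) = y) with h0 | ⟨x, hx⟩
    · rw [h0]; simp
    · apply Finset.card_le_card_of_injOn (fun v => v - x)
      · intro v hv
        rw [Finset.mem_coe, Finset.mem_filter] at hv
        rw [Finset.mem_filter] at hx
        rw [Finset.mem_coe, Finset.mem_filter]
        constructor
        · have h1 : hammingNorm v ≤ r / 2 := (Finset.mem_filter.1 hv.1).2
          have h2 : hammingNorm x ≤ r / 2 := (Finset.mem_filter.1 hx.1).2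
          have h3 := hammingDist_triangle x 0 v
          rw [hammingDist_zero_right, hammingDist_zero_left, hammingDist_eq_hammingNorm,
            neg_add_eq_sub] at h3
          have h4 : hammingNorm (v - x) ≤ r := by omega
          exact Finset.mem_filter.2 ⟨Finset.mem_univ _, h4⟩
        · intro i
          rw [sympInner_sub]
          have h1 := congrFun hv.2 i
          have h2 := congrFun hx.2 i
          exact sub_eq_zero.2 (h1.trans h2.symm)
      · intro v _ v' _ h
        exact sub_left_injective h

theorem good_lower {F : Type} [Field F] [Fintype F] [DecidableEq F] {n r m : ℕ} :
    volS (Fintype.card F) n (r/2) * (goodSet F n r m).card ≤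
      Fintype.card F ^ m * ((goodSet F n r (m+1)).card +
        Fintype.card F ^ m * (goodSet F n r m).card) := by
  set ext : (Fin m → Fin n → F × F) → Finset (Fin n → F × F) := fun u =>
    ((sympBall F n r).filter fun v => ∀ i, sympInner (u i) v = 0) \
      (Finset.univ.image fun a : Fin m → F => ∑ i, a i • u i) with hext
  have h1 : ∀ u, volS (Fintype.card F) n (r/2) ≤
      Fintype.card F ^ m * ((ext u).card + Fintype.card F ^ m) := by
    intro u
    have h2 := Finset.le_card_sdiff (Finset.univ.image fun a : Fin m → F => ∑ i, a i • u i)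
      ((sympBall F n r).filter fun v => ∀ i, sympInner (u i) v = 0)
    have h3 : (Finset.univ.image fun a : Fin m → F => ∑ i, a i • u i).card ≤
        Fintype.card F ^ m := by
      refine Finset.card_image_le.trans ?_
      simp
    have h4 := pigeon (r := r) u
    refine h4.trans ?_
    rw [mul_comm]
    apply Nat.mul_le_mul_left
    simp only [hext]
    omega
  have h5 : ∑ u ∈ goodSet F n r m, (ext u).card ≤ (goodSet F n r (m+1)).card := by
    rw [← Finset.card_sigma]
    apply Finset.card_le_card_of_injOn
      (fun p => (Fin.cons p.2 p.1 : Fin (m+1) → Fin n → F × F))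
    · rintro ⟨u, v⟩ hp
      rw [Finset.mem_coe, Finset.mem_sigma] at hp
      obtain ⟨hu, hv⟩ := hp
      have hu' : IsGood r u := by simpa [goodSet] using hu
      simp only [hext, Finset.mem_sdiff, Finset.mem_filter] at hv
      simp only [goodSet, Finset.mem_coe, Finset.mem_filter, Finset.mem_univ, true_and]
      refine ⟨?_, ?_, ?_⟩
      · intro i
        refine Fin.cases ?_ (fun i => ?_) i
        · simpa using hv.1.1
        · simpa using hu'.1 i
      · rw [linearIndependent_finCons]
        refine ⟨hu'.2.1, ?_⟩
        intro hs
        apply hv.2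
        rw [Submodule.mem_span_range_iff_exists_fun] at hs
        obtain ⟨c, hc⟩ := hs
        exact Finset.mem_image.2 ⟨c, Finset.mem_univ _, hc⟩
      · intro i k
        refine Fin.cases ?_ (fun i => ?_) i <;> refine Fin.cases ?_ (fun k => ?_) k
        · simpa using sympInner_self v
        · simp only [Fin.cons_zero, Fin.cons_succ]
          rw [sympInner_anti, hv.1.2, neg_zero]
        · simpa using hv.1.2 i
        · simpa using hu'.2.2 i k
    · rintro ⟨u, v⟩ _ ⟨u', v'⟩ _ h
      have := Fin.cons_injective2 h
      obtain ⟨rfl, rfl⟩ := this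
      rfl
  calc _ = ∑ u ∈ goodSet F n r m, volS (Fintype.card F) n (r/2) := by simp [mul_comm]
    _ ≤ ∑ u ∈ goodSet F n r m, Fintype.card F ^ m * ((ext u).card + Fintype.card F ^ m) :=
      Finset.sum_le_sum fun u _ => h1 u
    _ = Fintype.card F ^ m * (∑ u ∈ goodSet F n r m, (ext u).card +
        Fintype.card F ^ m * (goodSet F n r m).card) := by
      rw [← Finset.mul_sum, Finset.sum_add_distrib]; simp [mul_comm]
    _ ≤ _ := by gcongr

theorem per_n {F : Type} [Field F] [Fintype F] [DecidableEq F] {n r K m : ℕ}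
    (ψ : AddChar F ℂ) (hψ : ψ.IsPrimitive) (X e : ℝ) (hX : 1 ≤ X) (he : 0 ≤ e)
    (hB : (volS (Fintype.card F) n K : ℝ) * (Fintype.card F : ℝ) ^ (2 * (m + 1)) * X ≤
      volS (Fintype.card F) n (r / 2))
    (hA : ∀ w : Fin n → F × F, K < sympWt w →
      (Fintype.card F : ℝ) ^ (m + 1) * ‖∑ v ∈ sympBall F n r, ψ (sympInner w v)‖ ≤
        e * (volS (Fintype.card F) n r : ℝ)) :
    (((goodSet F n r (m+1)).filter fun u =>
      ¬ ((1 - e) / (Fintype.card F : ℝ) ^ (m+1) * (volS (Fintype.card F) n r : ℝ) ≤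
          (((sympBall F n r).filter fun v => ∀ i, sympInner (u i) v = 0).card : ℝ) ∧
        (((sympBall F n r).filter fun v => ∀ i, sympInner (u i) v = 0).card : ℝ) ≤
          (1 + e) / (Fintype.card F : ℝ) ^ (m+1) * (volS (Fintype.card F) n r : ℝ))).card : ℝ) * X ≤
      ((goodSet F n r (m+1)).card : ℝ) := by
  have hq2 : (2 : ℝ) ≤ Fintype.card F := by exact_mod_cast Fintype.one_lt_card (α := F)
  have hqp : 0 < (Fintype.card F : ℝ) ^ (m+1) := by positivity
  set V := (volS (Fintype.card F) n r : ℝ) with hV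
  have hV0 : 0 ≤ V := by positivity
  have hsub : ((goodSet F n r (m+1)).filter fun u =>
      ¬ ((1 - e) / (Fintype.card F : ℝ) ^ (m+1) * V ≤
          (((sympBall F n r).filter fun v => ∀ i, sympInner (u i) v = 0).card : ℝ) ∧
        (((sympBall F n r).filter fun v => ∀ i, sympInner (u i) v = 0).card : ℝ) ≤
          (1 + e) / (Fintype.card F : ℝ) ^ (m+1) * V)) ⊆
      (goodSet F n r (m+1)).filter fun u => ∃ a : Fin (m+1) → F, a ≠ 0 ∧
        sympWt (∑ i, a i • u i) ≤ K := by
    intro u hu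
    rw [Finset.mem_filter] at hu ⊢
    refine ⟨hu.1, ?_⟩
    by_contra hcon
    push Not at hcon
    apply hu.2
    have h := fourier_est (r := r) ψ hψ u (e * V / (Fintype.card F : ℝ) ^ (m+1)) (by positivity)
      (fun a ha => by
        rw [le_div_iff₀ hqp, mul_comm]
        exact hA _ (hcon a ha))
    rw [mul_div_cancel₀ _ hqp.ne', abs_le] at h
    rw [div_mul_eq_mul_div, div_mul_eq_mul_div, div_le_iff₀ hqp, le_div_iff₀ hqp]
    constructor <;> nlinarith [h.1, h.2]
  have h1 := (Finset.card_le_card hsub).trans bad_count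
  have h2 := good_lower (F := F) (n := n) (r := r) (m := m)
  have h1' : ((((goodSet F n r (m+1)).filter fun u =>
      ¬ ((1 - e) / (Fintype.card F : ℝ) ^ (m+1) * V ≤
          (((sympBall F n r).filter fun v => ∀ i, sympInner (u i) v = 0).card : ℝ) ∧
        (((sympBall F n r).filter fun v => ∀ i, sympInner (u i) v = 0).card : ℝ) ≤
          (1 + e) / (Fintype.card F : ℝ) ^ (m+1) * V)).card : ℕ) : ℝ) ≤
      (Fintype.card F : ℝ) ^ (m+1) *
        ((volS (Fintype.card F) n K : ℝ) * ((goodSet F n r m).card : ℝ)) := by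
    exact_mod_cast h1
  have h2' : (volS (Fintype.card F) n (r/2) : ℝ) * ((goodSet F n r m).card : ℝ) ≤
      (Fintype.card F : ℝ) ^ m * (((goodSet F n r (m+1)).card : ℝ) +
        (Fintype.card F : ℝ) ^ m * ((goodSet F n r m).card : ℝ)) := by
    exact_mod_cast h2
  have hVK : (1 : ℝ) ≤ volS (Fintype.card F) n K := by
    have : 1 ≤ volS (Fintype.card F) n K := by
      unfold volS
      refine le_trans ?_ (Finset.single_le_sum
        (f := fun i => n.choose i * (Fintype.card F ^ 2 - 1) ^ i)
        (fun _ _ => Nat.zero_le _) (Finset.mem_range.2 (Nat.succ_pos K)))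
      simp
    exact_mod_cast this
  refine (mul_le_mul_of_nonneg_right h1' (by linarith)).trans ?_
  generalize ((goodSet F n r (m+1)).card : ℝ) = G' at *
  have hG : (0 : ℝ) ≤ ((goodSet F n r m).card : ℝ) := by positivity
  generalize ((goodSet F n r m).card : ℝ) = G at *
  generalize (volS (Fintype.card F) n K : ℝ) = W at *
  generalize (volS (Fintype.card F) n (r/2) : ℝ) = Z at *
  generalize (Fintype.card F : ℝ) = q at *
  have hp : 0 < q ^ m := by positivity
  rw [show q ^ (2 * (m+1)) = q ^ m * q ^ m * q ^ 2 by ring] at hB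
  rw [pow_succ]
  refine le_of_mul_le_mul_left ?_ hp
  generalize q ^ m = p at *
  have hWX : 1 ≤ W * X := by nlinarith
  have h3 := mul_le_mul_of_nonneg_right hB hG
  have h4 : p * p * G * (1 + W * X * q) ≤ p * p * G * (W * X * q ^ 2) := by
    apply mul_le_mul_of_nonneg_left _ (by positivity)
    have : 1 * (2 * 1) ≤ (W * X) * (q * (q - 1)) := by
      apply mul_le_mul hWX _ (by norm_num) (by linarith)
      apply mul_le_mul hq2 _ (by norm_num) (by linarith)
      linarith
    nlinarith
  nlinarith

theorem vol_upper (q n K : ℕ) (hq : 1 ≤ q) (hK : K ≤ n) (t : ℝ) (ht : 0 < t) (ht1 : t ≤ 1) :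
    (volS q n K : ℝ) * t ^ K ≤ (1 + ((q : ℝ) ^ 2 - 1) * t) ^ n := by
  have hq2 : 1 ≤ q ^ 2 := Nat.one_le_pow _ _ hq
  have hQ : (0 : ℝ) ≤ (q : ℝ) ^ 2 - 1 := by
    have : (1 : ℝ) ≤ (q : ℝ) ^ 2 := by exact_mod_cast hq2
    linarith
  unfold volS
  push_cast [Nat.cast_sub hq2]
  rw [Finset.sum_mul, add_comm (1 : ℝ), add_pow]
  refine (Finset.sum_le_sum fun i hi => ?_).trans
    (Finset.sum_le_sum_of_subset_of_nonneg
      (Finset.range_subset_range.2 (Nat.succ_le_succ hK)) fun i _ _ => by positivity)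
  have hi' : i ≤ K := by simp at hi; omega
  rw [one_pow, mul_one, mul_pow]
  calc _ ≤ (n.choose i : ℝ) * ((q : ℝ) ^ 2 - 1) ^ i * t ^ i := by
        apply mul_le_mul_of_nonneg_left _ (by positivity)
        exact pow_le_pow_of_le_one ht.le ht1 hi'
    _ = _ := by ring

theorem vol_lower (q n m : ℕ) (hq : 1 ≤ q) (hm : m ≤ n) : q ^ (2 * m) ≤ volS q n m := by
  have hq2 : 1 ≤ q ^ 2 := Nat.one_le_pow _ _ hq
  have h := add_pow (q ^ 2 - 1) 1 m
  rw [Nat.sub_add_cancel hq2, ← pow_mul] at h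
  rw [h]
  unfold volS
  apply Finset.sum_le_sum
  intro i _
  rw [one_pow, mul_one, mul_comm]
  exact Nat.mul_le_mul_right _ (Nat.choose_le_choose i hm)

theorem quad (A B η : ℝ) (hη : 0 < η) : ∃ N : ℕ, ∀ n : ℕ, N ≤ n →
    A * Real.sqrt n + B ≤ η * n := by
  obtain ⟨N, hN⟩ := exists_nat_ge (max 1 ((|A| + |B|) / η) ^ 2)
  refine ⟨N, fun n hn => ?_⟩
  have h1 : max 1 ((|A| + |B|) / η) ≤ Real.sqrt n := by
    apply Real.le_sqrt_of_sq_le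
    exact hN.trans (by exact_mod_cast hn)
  have h2 : 1 ≤ Real.sqrt n := (le_max_left _ _).trans h1
  have h3 : (|A| + |B|) / η ≤ Real.sqrt n := (le_max_right _ _).trans h1
  rw [div_le_iff₀ hη] at h3
  have h4 : Real.sqrt n * Real.sqrt n = n := Real.mul_self_sqrt (by positivity)
  have h5 := le_abs_self A
  have h6 := le_abs_self B
  have h7 := abs_nonneg B
  calc _ ≤ |A| * Real.sqrt n + |B| * Real.sqrt n := by nlinarith
    _ = (|A| + |B|) * Real.sqrt n := by ring
    _ ≤ (Real.sqrt n * η) * Real.sqrt n := by gcongr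
    _ = η * (Real.sqrt n * Real.sqrt n) := by ring
    _ = _ := by rw [h4]

theorem asymp_A (q : ℕ) (hq : 2 ≤ q) (η : ℝ) (hη : 0 < η) : ∃ N : ℕ, ∀ n : ℕ, N ≤ n →
    ∀ ℓ : ℕ, (ℓ : ℝ) ≤ Real.sqrt n → (q : ℝ) ^ ℓ * ((n : ℝ) + 1) ≤ Real.exp (η * n) := by
  obtain ⟨N, hN⟩ := quad (Real.log q + 2) 0 η hη
  refine ⟨N, fun n hn ℓ hℓ => ?_⟩
  have hL : 0 ≤ Real.log q := Real.log_natCast_nonneg q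
  have hq0 : (0 : ℝ) < q := by positivity
  have h1 : (q : ℝ) ^ ℓ = Real.exp (Real.log q * ℓ) := by
    rw [← Real.rpow_natCast, Real.rpow_def_of_pos hq0]
  have h2 : (n : ℝ) + 1 ≤ Real.exp (2 * Real.sqrt n) := by
    have h3 := Real.add_one_le_exp (Real.sqrt n)
    have h4 : Real.sqrt n * Real.sqrt n = n := Real.mul_self_sqrt (by positivity)
    have h5 := Real.sqrt_nonneg n
    have h6 : Real.exp (2 * Real.sqrt n) = Real.exp (Real.sqrt n) * Real.exp (Real.sqrt n) := by
      rw [← Real.exp_add]; ring_nf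
    rw [h6]
    nlinarith
  rw [h1]
  calc _ ≤ Real.exp (Real.log q * Real.sqrt n) * Real.exp (2 * Real.sqrt n) := by
        gcongr
    _ = Real.exp ((Real.log q + 2) * Real.sqrt n + 0) := by rw [← Real.exp_add]; ring_nf
    _ ≤ _ := Real.exp_le_exp.2 (hN n hn)

theorem asymp_B (q : ℕ) (hq : 2 ≤ q) (δ : ℝ) (hδ : 0 < δ) (hδ1 : δ < 1) :
    ∃ ε : ℝ, 0 < ε ∧ ∃ N : ℕ, ∀ n : ℕ, N ≤ n → ∀ ℓ : ℕ, (ℓ : ℝ) ≤ Real.sqrt n →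
      (volS q n ⌊ε * (n:ℝ)⌋₊ : ℝ) * (q : ℝ) ^ (2 * ℓ) * (q : ℝ) ^ (δ / 8 * (n : ℝ)) ≤
        volS q n (⌊δ * (n : ℝ)⌋₊ / 2) := by
  have hq0 : (0 : ℝ) < q := by positivity
  have hq2 : (2 : ℝ) ≤ q := by exact_mod_cast hq
  have hL : 0 < Real.log q := Real.log_pos (by linarith)
  set L := Real.log q with hLdef
  set Q := (q : ℝ) ^ 2 - 1 with hQdef
  have hQ : 0 < Q := by rw [hQdef]; nlinarith
  obtain ⟨t, ht0, ht1, htQ⟩ : ∃ t : ℝ, 0 < t ∧ t ≤ 1 / 2 ∧ Q * t ≤ δ * L / 8 := by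
    refine ⟨min (1/2) (δ * L / 8 / Q), by positivity, min_le_left _ _, ?_⟩
    have := min_le_right (1/2) (δ * L / 8 / Q)
    rw [le_div_iff₀ hQ] at this
    linarith
  have hM : 0 < - Real.log t := by
    have := Real.log_neg ht0 (by linarith)
    linarith
  obtain ⟨ε, hε0, hε1, hεM⟩ : ∃ ε : ℝ, 0 < ε ∧ ε ≤ 1 ∧ ε * (- Real.log t) ≤ δ * L / 8 := by
    refine ⟨min 1 (δ * L / 8 / (- Real.log t)), by positivity, min_le_left _ _, ?_⟩
    have := min_le_right 1 (δ * L / 8 / (- Real.log t))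
    rwa [le_div_iff₀ hM] at this
  obtain ⟨N, hN⟩ := quad 2 3 (δ / 2) (by positivity)
  refine ⟨ε, hε0, N, fun n hn ℓ hℓ => ?_⟩
  have hn0 : (0 : ℝ) ≤ n := by positivity
  set K := ⌊ε * (n:ℝ)⌋₊ with hK
  have hKn : (K : ℝ) ≤ ε * n := Nat.floor_le (by positivity)
  have hKn' : K ≤ n := by
    have : (K : ℝ) ≤ n := by nlinarith
    exact_mod_cast this
  have h1 := vol_upper q n K (by omega) hKn' t ht0 (by linarith)
  have htK : t ^ K = Real.exp (Real.log t * K) := by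
    rw [← Real.rpow_natCast, Real.rpow_def_of_pos ht0]
  have h2 : (volS q n K : ℝ) ≤ Real.exp (δ * L / 4 * n) := by
    have h3 : (1 + Q * t) ^ n ≤ Real.exp (δ * L / 8 * n) := by
      calc (1 + Q * t) ^ n ≤ Real.exp (Q * t) ^ n := by
            gcongr
            linarith [Real.add_one_le_exp (Q * t)]
        _ = Real.exp (n * (Q * t)) := (Real.exp_nat_mul _ _).symm
        _ ≤ _ := Real.exp_le_exp.2 (by nlinarith)
    have h4 : Real.exp (-(δ * L / 8 * n)) ≤ t ^ K := by
      rw [htK]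
      apply Real.exp_le_exp.2
      have : (K : ℝ) * (- Real.log t) ≤ (ε * n) * (- Real.log t) := by gcongr
      nlinarith
    have h5 : (volS q n K : ℝ) * Real.exp (-(δ * L / 8 * n)) ≤ Real.exp (δ * L / 8 * n) :=
      (mul_le_mul_of_nonneg_left h4 (by positivity)).trans (h1.trans h3)
    rw [Real.exp_neg, ← div_eq_mul_inv, div_le_iff₀ (Real.exp_pos _), ← Real.exp_add] at h5
    refine h5.trans (Real.exp_le_exp.2 (by linarith))
  have hr : (⌊δ * (n : ℝ)⌋₊ : ℝ) ≤ δ * n := Nat.floor_le (by positivity)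
  have hr1 : δ * n < (⌊δ * (n : ℝ)⌋₊ : ℝ) + 1 := Nat.lt_floor_add_one _
  generalize ⌊δ * (n : ℝ)⌋₊ = r at *
  have hrn : r / 2 ≤ n := by
    have : (r : ℝ) ≤ n := by nlinarith
    have : r ≤ n := by exact_mod_cast this
    omega
  have h6 := vol_lower q n (r / 2) (by omega) hrn
  have h6' : (q : ℝ) ^ (2 * (r / 2)) ≤ volS q n (r / 2) := by exact_mod_cast h6
  refine le_trans ?_ h6'
  have h7 : (q : ℝ) ^ (2 * (r / 2)) = Real.exp (L * ((2 * (r / 2) : ℕ) : ℝ)) := by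
    rw [← Real.rpow_natCast, Real.rpow_def_of_pos hq0]
  have h8 : (q : ℝ) ^ (2 * ℓ) = Real.exp (L * ((2 * ℓ : ℕ) : ℝ)) := by
    rw [← Real.rpow_natCast, Real.rpow_def_of_pos hq0]
  rw [h7, h8, Real.rpow_def_of_pos hq0]
  have h9 : (r : ℝ) ≤ ((2 * (r / 2) : ℕ) : ℝ) + 1 := by
    have : r ≤ 2 * (r / 2) + 1 := by omega
    exact_mod_cast this
  calc _ ≤ Real.exp (δ * L / 4 * n) * Real.exp (L * ((2 * ℓ : ℕ) : ℝ)) *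
        Real.exp (L * (δ / 8 * n)) := by gcongr
    _ = Real.exp (L * (δ / 4 * n + ((2 * ℓ : ℕ) : ℝ) + δ / 8 * n)) := by
      rw [← Real.exp_add, ← Real.exp_add]; ring_nf
    _ ≤ _ := by
      apply Real.exp_le_exp.2
      apply mul_le_mul_of_nonneg_left _ hL.le
      have := hN n hn
      have h10 : 0 ≤ δ * n := by positivity
      push_cast at h9 ⊢
      linarith

set_option maxHeartbeats 1000000

/-- For a prime power `q` (realized as the cardinality of a finite field `F`)
and a constant `δ ∈ (0, 1 - 1/q²)`, there exist `c, c', c'' > 0` such that for all sufficiently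
large `n`, with `d - 1 = ⌊δn⌋` and `ℓ = ⌊c''√n⌋`: among all linearly independent, pairwise
symplectically orthogonal `ℓ`-tuples of vectors of `B_q^S(2n, d-1)`, the number of tuples for
which the two-sided estimate on `|B_q^S(2n,d-1) ∩ ⋂_i ⟨u_i⟩^{⊥_S}|` fails is at most a
`q^{-c'n}` fraction of all such tuples. -/
theorem symp_orth_tuple_intersection_bound
    (q : ℕ) (F : Type) [Field F] [Fintype F] [DecidableEq F] (hF : Fintype.card F = q)
    (δ : ℝ) (hδ0 : 0 < δ) (hδ : δ < 1 - 1 / (q : ℝ) ^ 2) :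
    ∃ c : ℝ, 0 < c ∧ ∃ c' : ℝ, 0 < c' ∧ ∃ c'' : ℝ, 0 < c'' ∧ ∃ N : ℕ, ∀ n : ℕ, N ≤ n →
      ∀ ℓ : ℕ, ℓ = ⌊c'' * Real.sqrt n⌋₊ →
      ∀ good : Finset (Fin ℓ → Fin n → F × F),
        good = ((Finset.univ : Finset (Fin ℓ → Fin n → F × F)).filter fun u =>
          (∀ i, u i ∈ sympBall F n ⌊δ * (n : ℝ)⌋₊) ∧ LinearIndependent F u ∧
            ∀ i j, sympInner (u i) (u j) = 0) →
        ((good.filter fun u =>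
            ¬ ((1 - (q : ℝ) ^ (-(c * (n : ℝ)))) / (q : ℝ) ^ ℓ *
                  (volS q n ⌊δ * (n : ℝ)⌋₊ : ℝ) ≤
                (((sympBall F n ⌊δ * (n : ℝ)⌋₊).filter fun v =>
                    ∀ i, sympInner (u i) v = 0).card : ℝ) ∧
                (((sympBall F n ⌊δ * (n : ℝ)⌋₊).filter fun v =>
                    ∀ i, sympInner (u i) v = 0).card : ℝ) ≤
                (1 + (q : ℝ) ^ (-(c * (n : ℝ)))) / (q : ℝ) ^ ℓ *
                  (volS q n ⌊δ * (n : ℝ)⌋₊ : ℝ))).card : ℝ) ≤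
          (q : ℝ) ^ (-(c' * (n : ℝ))) * (good.card : ℝ) := by
  subst hF
  have hq : 2 ≤ Fintype.card F := Fintype.one_lt_card (α := F)
  generalize hqd : Fintype.card F = q at *
  have hq0 : (0 : ℝ) < q := by positivity
  have hq2 : (2 : ℝ) ≤ q := by exact_mod_cast hq
  have hL : 0 < Real.log q := Real.log_pos (by linarith)
  have hδ1 : δ < 1 := by
    have : 0 < 1 / (q : ℝ) ^ 2 := by positivity
    linarith
  obtain ⟨ε, hε, NB, hNB⟩ := asymp_B q hq δ hδ0 hδ1
  obtain ⟨Q, hQdef⟩ : ∃ Q : ℝ, Q = (q : ℝ) ^ 2 - 1 := ⟨_, rfl⟩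
  have hQ : 3 ≤ Q := by rw [hQdef]; nlinarith
  obtain ⟨t0, ht0def⟩ : ∃ t0 : ℝ, t0 = δ / (2 * Q) := ⟨_, rfl⟩
  have ht0 : 0 < t0 := by rw [ht0def]; positivity
  obtain ⟨ρ, hρdef⟩ : ∃ ρ : ℝ, ρ = (1 + t0) / (1 + Q * t0) := ⟨_, rfl⟩
  have hD : 0 < 1 + Q * t0 := by positivity
  have hρ0 : 0 < ρ := by rw [hρdef]; positivity
  have hρ1 : ρ < 1 := by rw [hρdef, div_lt_one hD]; nlinarith
  have hlam : 0 < - Real.log ρ := by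
    have := Real.log_neg hρ0 hρ1
    linarith
  obtain ⟨lam, hlamdef⟩ : ∃ lam : ℝ, lam = - Real.log ρ := ⟨_, rfl⟩
  rw [← hlamdef] at hlam
  obtain ⟨NA, hNA⟩ := asymp_A q hq (ε * lam / 2) (by positivity)
  obtain ⟨NC, hNC⟩ := exists_nat_ge (2 / δ)
  refine ⟨ε * lam / (2 * Real.log q), by positivity, δ / 8, by positivity, 1, one_pos,
    max (max NA NB) (max NC 1), ?_⟩
  intro n hn ℓ hℓ good hgood
  have hnA : NA ≤ n := by omega
  have hnB : NB ≤ n := by omega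
  have hnC : NC ≤ n := by omega
  have hn1 : 1 ≤ n := by omega
  have hnpos : (0 : ℝ) < n := by exact_mod_cast hn1
  have hnδ : 2 ≤ δ * n := by
    have : 2 / δ ≤ n := hNC.trans (by exact_mod_cast hnC)
    rw [div_le_iff₀ hδ0] at this
    linarith
  rw [one_mul] at hℓ
  have hℓs : (ℓ : ℝ) ≤ Real.sqrt n := by
    rw [hℓ]; exact Nat.floor_le (Real.sqrt_nonneg _)
  have hℓ1 : 1 ≤ ℓ := by
    rw [hℓ]
    apply Nat.le_floor
    rw [Nat.cast_one]
    exact Real.one_le_sqrt.2 (by exact_mod_cast hn1)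
  have hB := hNB n hnB ℓ hℓs
  have hA := hNA n hnA ℓ hℓs
  have hr : (⌊δ * (n : ℝ)⌋₊ : ℝ) ≤ δ * n := Nat.floor_le (by positivity)
  have hr1 : δ * n < (⌊δ * (n : ℝ)⌋₊ : ℝ) + 1 := Nat.lt_floor_add_one _
  generalize ⌊δ * (n : ℝ)⌋₊ = r at *
  obtain ⟨m, rfl⟩ : ∃ m, ℓ = m + 1 := ⟨ℓ - 1, by omega⟩
  clear hℓ
  have hgood' : good = goodSet F n r (m+1) := by
    rw [hgood]
    unfold goodSet IsGood
    congr
  have hrn : (r : ℝ) < n := by nlinarith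
  have hnr : 0 < (n : ℝ) - r := by linarith
  have hr2 : δ / 2 * n ≤ r := by linarith
  have hrpos : (0 : ℝ) < r := by nlinarith
  obtain ⟨t, htdef⟩ : ∃ t : ℝ, t = (r : ℝ) / ((n : ℝ) - r) / Q := ⟨_, rfl⟩
  have hQt : Q * t = (r : ℝ) / ((n : ℝ) - r) := by rw [htdef]; field_simp
  have ht : 0 < t := by rw [htdef]; positivity
  have ht1 : t ≤ 1 := by
    rw [htdef, div_div, div_le_one (by positivity)]
    have h1 : δ * (q : ℝ) ^ 2 ≤ Q := by
      have h2 := mul_le_mul_of_nonneg_right hδ.le (sq_nonneg (q : ℝ))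
      have h3 : (1 - 1 / (q : ℝ) ^ 2) * (q : ℝ) ^ 2 = (q : ℝ) ^ 2 - 1 := by field_simp
      rw [h3] at h2
      rw [hQdef]; exact h2
    have h4 : (q : ℝ) ^ 2 = Q + 1 := by rw [hQdef]; ring
    rw [h4] at h1
    have h5 : (r : ℝ) * (Q + 1) ≤ (δ * n) * (Q + 1) := by gcongr
    have h6 : (δ * (Q + 1)) * n ≤ Q * n := by gcongr
    nlinarith
  have htt : t0 ≤ t := by
    have h1 : δ / 2 ≤ (r : ℝ) / ((n : ℝ) - r) := by
      rw [le_div_iff₀ hnr]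
      nlinarith
    have h2 : t0 = δ / 2 / Q := by rw [ht0def, div_div]
    rw [h2, htdef]
    gcongr
  have hρ : 1 + t ≤ ρ * (1 + Q * t) := by
    rw [hρdef, div_mul_eq_mul_div, le_div_iff₀ hD]
    nlinarith
  have hψ := AddChar.FiniteField.primitiveChar_to_Complex_isPrimitive F
  generalize AddChar.FiniteField.primitiveChar_to_Complex F = ψ at hψ
  have he : (q : ℝ) ^ (-(ε * lam / (2 * Real.log q) * (n : ℝ))) = Real.exp (-(ε * lam / 2 * n)) := by
    rw [Real.rpow_def_of_pos hq0]
    congr 1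
    field_simp
  have hX : (q : ℝ) ^ (-(δ / 8 * (n : ℝ))) = ((q : ℝ) ^ (δ / 8 * (n : ℝ)))⁻¹ :=
    Real.rpow_neg hq0.le _
  have hX1 : 1 ≤ (q : ℝ) ^ (δ / 8 * (n : ℝ)) :=
    Real.one_le_rpow (by linarith) (by positivity)
  have main := per_n (F := F) (n := n) (r := r) (K := ⌊ε * (n : ℝ)⌋₊) (m := m) ψ hψ
    ((q : ℝ) ^ (δ / 8 * (n : ℝ))) ((q : ℝ) ^ (-(ε * lam / (2 * Real.log q) * (n : ℝ))))
    hX1 (by positivity) (by rw [hqd]; exact hB) ?_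
  · rw [hX, inv_mul_eq_div, le_div_iff₀ (by linarith), hgood']
    rw [hqd] at main
    exact main
  · intro w hw
    have h1 := heavy_bound (r := r) ψ hψ w ρ (by exact_mod_cast hrn) Q t
      (by rw [hqd]; exact hQdef) (by linarith) hQt ht ht1 hρ
    rw [hqd] at h1 ⊢
    have hw' : ε * n ≤ sympWt w := by
      have h2 := Nat.lt_floor_add_one (ε * (n : ℝ))
      have h3 : (⌊ε * (n : ℝ)⌋₊ : ℝ) + 1 ≤ sympWt w := by exact_mod_cast hw
      linarith
    have h4 : ρ ^ sympWt w ≤ Real.exp (-(ε * lam * n)) := by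
      rw [← Real.rpow_natCast, Real.rpow_def_of_pos hρ0]
      apply Real.exp_le_exp.2
      have : lam * (ε * n) ≤ lam * (sympWt w : ℝ) := by gcongr
      have h5 : Real.log ρ = - lam := by rw [hlamdef]; ring
      rw [h5]
      linarith
    rw [he]
    calc _ ≤ (q : ℝ) ^ (m + 1) * (((n : ℝ) + 1) * ρ ^ (sympWt w) * (volS q n r : ℝ)) := by gcongr
      _ = ((q : ℝ) ^ (m + 1) * ((n : ℝ) + 1)) * ρ ^ (sympWt w) * (volS q n r : ℝ) := by ring
      _ ≤ Real.exp (ε * lam / 2 * n) * Real.exp (-(ε * lam * n)) * (volS q n r : ℝ) := by gcongr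
      _ = _ := by rw [← Real.exp_add]; ring_nf
end

section
/- Let q be a prime power and let δ ∈ (0, 1 − 1/q²) be a constant. Then there exist constants c'' > 0 and h'_δ ∈ (0,1), depending only on q and δ, such that for all sufficiently large n the following holds: for every integer ℓ with 2 ≤ ℓ ≤ c''√n, if (v_1, …, v_ℓ) is drawn uniformly at random from the (nonempty) set of ℓ-tuples of vectors in B_q^S(2n, ⌊δn⌋) that are linearly independent over 𝔽_q and pairwise symplectically orthogonal (⟨v_i, v_j⟩_S = 0 for all i, j), then the probability that v_1 + v_2 + ⋯ + v_ℓ ∈ B_q^S(2n, ⌊δn⌋) is at most 2^{−h'_δ n}. -/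
open Finset
open scoped Classical

namespace SympAux

/-- Hamming ball. -/
def hBall (A : Type) [Fintype A] [Zero A] [DecidableEq A] (n r : ℕ) : Finset (Fin n → A) :=
  Finset.univ.filter fun x => hammingNorm x ≤ r

/-- Hamming sphere. -/
def hSph (A : Type) [Fintype A] [Zero A] [DecidableEq A] (n r : ℕ) : Finset (Fin n → A) :=
  Finset.univ.filter fun x => hammingNorm x = r

lemma pow_wt {A R : Type} [Zero A] [DecidableEq A] [CommSemiring R] {n : ℕ} (t : R)
    (x : Fin n → A) : t ^ hammingNorm x = ∏ i, (if x i = 0 then 1 else t) := by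
  rw [Finset.prod_ite]
  simp [hammingNorm]

lemma sum_prod {A R : Type} [Fintype A] [CommSemiring R] {n : ℕ}
    (g : Fin n → A → R) : ∑ x : Fin n → A, ∏ i, g i (x i) = ∏ i, ∑ a, g i a := by
  rw [Finset.prod_univ_sum, Fintype.piFinset_univ]

lemma card_sph (A : Type) [Fintype A] [Zero A] [DecidableEq A] (n k : ℕ) :
    (hSph A n k).card = n.choose k * (Fintype.card A - 1) ^ k := by
  have h : ∑ x : Fin n → A, (Polynomial.X : Polynomial ℕ) ^ hammingNorm x
      = (Polynomial.C (Fintype.card A - 1) * Polynomial.X + 1) ^ n := by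
    simp_rw [pow_wt]
    rw [sum_prod (fun _ a => if a = 0 then (1 : Polynomial ℕ) else Polynomial.X)]
    rw [Finset.prod_const, Finset.sum_ite]
    simp [Finset.filter_ne', Finset.card_erase_of_mem, Finset.filter_eq', add_comm]
  have h2 := congrArg (fun p => Polynomial.coeff p k) h
  simp only [Polynomial.finsetSum_coeff, Polynomial.coeff_X_pow] at h2
  have h3 : (Polynomial.C (Fintype.card A - 1) * Polynomial.X + 1 : Polynomial ℕ) ^ n =
      ((Polynomial.X + 1) ^ n : Polynomial ℕ).comp
        (Polynomial.C (Fintype.card A - 1) * Polynomial.X) := by simp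
  rw [h3, Polynomial.comp_C_mul_X_coeff, Polynomial.coeff_X_add_one_pow] at h2
  rw [hSph, Finset.card_filter]
  simpa [eq_comm] using h2

lemma mode (n r : ℕ) (hr : 0 < r) (hrn : r < n) (θ : ℝ) (hθ : θ = r / ((n:ℝ) - r)) :
    (1 + θ) ^ n ≤ (n + 1) * (n.choose r * θ ^ r) := by
  have hnr : (0:ℝ) < (n:ℝ) - r := by
    have : (r:ℝ) < n := by exact_mod_cast hrn
    linarith
  have hθ0 : 0 < θ := by rw [hθ]; positivity
  have hθm : θ * ((n:ℝ) - r) = r := by rw [hθ]; field_simp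
  set f : ℕ → ℝ := fun k => n.choose k * θ ^ k with hf
  have rec1 : ∀ k, k ≤ n → f (k+1) * (k+1) = f k * (((n:ℝ) - k) * θ) := by
    intro k hk
    have := Nat.choose_succ_right_eq n k
    have h2 : (n.choose (k+1) : ℝ) * (k+1) = n.choose k * ((n:ℝ) - k) := by
      have := congrArg (Nat.cast : ℕ → ℝ) this
      push_cast [Nat.cast_sub hk] at this
      exact this
    simp only [hf, pow_succ]
    linear_combination (θ^k * θ) * h2
  have f0 : ∀ k, 0 ≤ f k := fun k => by simp only [hf]; positivity
  have up : ∀ j, ∀ k, k + j = r → f k ≤ f r := by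
    intro j
    induction j with
    | zero => intro k hk; simp at hk; rw [hk]
    | succ j ih =>
      intro k hk
      refine le_trans ?_ (ih (k+1) (by omega))
      have hkn : k ≤ n := by omega
      have e := rec1 k hkn
      have h1 : (k:ℝ) + 1 ≤ r := by exact_mod_cast (by omega : k + 1 ≤ r)
      have h2 : (k:ℝ) + 1 ≤ ((n:ℝ) - k) * θ := by nlinarith
      have h3 := mul_le_mul_of_nonneg_left h2 (f0 k)
      rw [← e] at h3
      exact le_of_mul_le_mul_right h3 (by positivity)
  have down : ∀ j, r + j ≤ n → f (r + j) ≤ f r := by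
    intro j
    induction j with
    | zero => simp
    | succ j ih =>
      intro hk
      refine le_trans ?_ (ih (by omega))
      have e := rec1 (r+j) (by omega)
      have h2 : ((n:ℝ) - (r+j : ℕ)) * θ ≤ ((r+j:ℕ):ℝ) + 1 := by
        push_cast; nlinarith
      have h3 := mul_le_mul_of_nonneg_left h2 (f0 (r+j))
      rw [← e] at h3
      exact le_of_mul_le_mul_right h3 (by positivity)
  have all : ∀ k ∈ Finset.range (n+1), f k ≤ f r := by
    intro k hk
    simp at hk
    rcases le_total k r with h | h
    · exact up (r - k) k (by omega)
    · have := down (k - r) (by omega)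
      rwa [show r + (k - r) = k by omega] at this
  calc (1+θ)^n = ∑ k ∈ Finset.range (n+1), f k := by
        rw [add_comm, add_pow]
        simp [hf, mul_comm]
    _ ≤ ∑ k ∈ Finset.range (n+1), f r := Finset.sum_le_sum all
    _ = _ := by simp [hf]

section
variable {A : Type} [Fintype A] [AddCommGroup A] [DecidableEq A]

/-- one-coordinate measure -/
noncomputable def mu (A : Type) [Zero A] [DecidableEq A] (d p : ℝ) (a : A) : ℝ :=
  if a = 0 then 1 - d else p

lemma mu_sum (d p : ℝ) (hp : p * ((Fintype.card A : ℝ) - 1) = d) : ∑ a : A, mu A d p a = 1 := by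
  have : ∀ a : A, mu A d p a = p + if a = 0 then (1 - d - p) else 0 := by
    intro a; simp only [mu]; split_ifs <;> ring
  simp_rw [this, Finset.sum_add_distrib]
  simp
  linarith

lemma E_bound (d p t γ : ℝ) (hp : p * ((Fintype.card A : ℝ) - 1) = d) (hpd : p ≤ 1 - d)
    (ht : t ≤ 1) (hγ : γ ≤ d * (1 - d - p)) (c : A) :
    ∑ a : A, mu A d p a * ∑ b : A, mu A d p b * (if a + b + c = 0 then 1 else t)
      ≤ 1 - (1 - t) * (d + γ) := by
  have h1 : ∀ a : A, ∑ b : A, mu A d p b * (if a + b + c = 0 then 1 else t)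
      = t + (1 - t) * mu A d p (-(a + c)) := by
    intro a
    have : ∀ b : A, mu A d p b * (if a + b + c = 0 then 1 else t)
        = t * mu A d p b + if b = -(a+c) then (1 - t) * mu A d p b else 0 := by
      intro b
      have : a + b + c = 0 ↔ b = -(a + c) := by
        rw [← sub_eq_zero (a := b)]; 
        rw [show a + b + c = b - -(a+c) by abel]
      simp only [this]
      split_ifs <;> ring
    simp_rw [this, Finset.sum_add_distrib, ← Finset.mul_sum, mu_sum d p hp]
    simp
  have h2 : ∀ a : A, mu A d p (-(a+c)) = p + if a = -c then (1 - d - p) else 0 := by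
    intro a
    have : -(a + c) = 0 ↔ a = -c := by
      rw [neg_eq_zero, add_eq_zero_iff_eq_neg]
    simp only [mu, this]
    split_ifs <;> ring
  have h3 : ∑ a : A, mu A d p a * (t + (1 - t) * mu A d p (-(a + c)))
      = t + (1 - t) * (p + (1 - d - p) * mu A d p (-c)) := by
    have : ∀ a : A, mu A d p a * (t + (1 - t) * mu A d p (-(a + c)))
       = (t + (1-t) * p) * mu A d p a + if a = -c then (1-t) * (1-d-p) * mu A d p a else 0 := by
      intro a; rw [h2]; split_ifs <;> ring
    simp_rw [this, Finset.sum_add_distrib, ← Finset.mul_sum, mu_sum d p hp]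
    simp
    ring
  simp_rw [h1]
  rw [h3]
  have h4 : mu A d p (-c) ≤ 1 - d := by
    simp only [mu]; split_ifs <;> linarith
  have h5 : (1 - d - p) * mu A d p (-c) ≤ (1 - d - p) * (1 - d) :=
    mul_le_mul_of_nonneg_left h4 (by linarith)
  have h6 : (1-t) * (p + (1 - d - p) * mu A d p (-c)) ≤ (1-t) * (1 - d - γ) :=
    mul_le_mul_of_nonneg_left (by nlinarith) (by linarith)
  nlinarith

lemma ball_mu (n r : ℕ) (hr : 0 < r) (hrn : r < n) (d p : ℝ) (hd : d = r / n) (hp0 : 0 ≤ p)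
    (hp : p * ((Fintype.card A : ℝ) - 1) = d) (hpd : p ≤ 1 - d) (x : Fin n → A)
    (hx : hammingNorm x ≤ r) :
    1 ≤ ((n + 1) * ((hBall A n r).card : ℝ)) * ∏ i, mu A d p (x i) := by
  have hn : (0:ℝ) < n := by exact_mod_cast (by omega : 0 < n)
  have hnr : (0:ℝ) < (n:ℝ) - r := by
    have : (r:ℝ) < n := by exact_mod_cast hrn
    linarith
  have h1d : 0 < 1 - d := by
    rw [hd]; rw [sub_pos, div_lt_one hn]; linarith
  set l := p / (1 - d) with hl
  have hl0 : 0 ≤ l := by positivity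
  have hl1 : l ≤ 1 := by rw [hl, div_le_one h1d]; exact hpd
  have e1 : ∏ i, mu A d p (x i) = (1-d)^n * l ^ hammingNorm x := by
    rw [pow_wt]
    have : (1-d)^n = ∏ i : Fin n, (1-d) := by simp
    rw [this, ← Finset.prod_mul_distrib]
    refine Finset.prod_congr rfl fun i _ => ?_
    simp only [mu, hl]
    split_ifs <;> field_simp
  have e2 : l ^ r ≤ l ^ hammingNorm x := pow_le_pow_of_le_one hl0 hl1 hx
  set θ : ℝ := r / ((n:ℝ) - r) with hθ
  have hcard : 1 ≤ Fintype.card A := Fintype.card_pos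
  have e3 : ((Fintype.card A : ℝ) - 1) * l = θ := by
    rw [hl, hθ]
    have : 1 - d = (n - r) / n := by rw [hd]; field_simp
    rw [← mul_div_assoc, mul_comm, hp, this, hd]
    field_simp
  have m := mode n r hr hrn θ hθ
  have e4 : (n.choose r : ℝ) * ((Fintype.card A : ℝ) - 1)^r ≤ (hBall A n r).card := by
    have : (hSph A n r).card ≤ (hBall A n r).card := by
      apply Finset.card_le_card
      intro y; simp only [hSph, hBall, Finset.mem_filter]; rintro ⟨a, b⟩; exact ⟨a, b.le⟩
    rw [card_sph] at this
    have := (Nat.cast_le (α := ℝ)).2 this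
    push_cast [Nat.cast_sub hcard] at this
    exact this
  have e5 : (1-d) * (1+θ) = 1 := by
    rw [hd, hθ]; field_simp; ring
  rw [e1]
  calc (1:ℝ) = (1-d)^n * (1+θ)^n := by rw [← mul_pow, e5, one_pow]
    _ ≤ (1-d)^n * ((n + 1) * (n.choose r * θ ^ r)) := by gcongr
    _ = (n+1) * (n.choose r * ((Fintype.card A : ℝ) - 1)^r) * ((1-d)^n * l^r) := by
        rw [← e3, mul_pow]; ring
    _ ≤ _ := by gcongr

lemma pair_bound (n r : ℕ) (hr : 0 < r) (hrn : r < n) (d p t γ : ℝ) (hd : d = r / n) (hp0 : 0 ≤ p)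
    (hp : p * ((Fintype.card A : ℝ) - 1) = d) (hpd : p ≤ 1 - d)
    (ht0 : 0 < t) (ht : t ≤ 1) (hγ : γ ≤ d * (1 - d - p)) (w : Fin n → A) :
    (∑ x ∈ hBall A n r, ∑ y ∈ hBall A n r, if x + y + w ∈ hBall A n r then (1:ℝ) else 0)
      ≤ ((n + 1) * ((hBall A n r).card : ℝ))^2 * ((t⁻¹)^r * (1 - (1 - t) * (d + γ))^n) := by
  set M : ℝ := (n + 1) * ((hBall A n r).card : ℝ) with hM
  have hM0 : 0 ≤ M := by positivity
  have h1d : 0 ≤ 1 - d := hp0.trans hpd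
  have mu0 : ∀ a : A, 0 ≤ mu A d p a := by intro a; simp only [mu]; split_ifs <;> assumption
  have P0 : ∀ x : Fin n → A, 0 ≤ ∏ i, mu A d p (x i) := fun x => Finset.prod_nonneg fun i _ => mu0 _
  have step : ∀ x ∈ hBall A n r, ∀ y ∈ hBall A n r,
      (if x + y + w ∈ hBall A n r then (1:ℝ) else 0) ≤
      M^2 * (t⁻¹)^r * ((∏ i, mu A d p (x i)) * ((∏ i, mu A d p (y i)) * t ^ hammingNorm (x + y + w))) := by
    intro x hx y hy
    have hx' := ball_mu n r hr hrn d p hd hp0 hp hpd x (by simpa [hBall] using hx)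
    have hy' := ball_mu n r hr hrn d p hd hp0 hp hpd y (by simpa [hBall] using hy)
    rw [← hM] at hx' hy'
    have hnn : 0 ≤ M^2 * (t⁻¹)^r * ((∏ i, mu A d p (x i)) * ((∏ i, mu A d p (y i)) * t ^ hammingNorm (x + y + w))) := by
      have := P0 x; have := P0 y
      positivity
    split_ifs with h
    · have h : hammingNorm (x+y+w) ≤ r := by simpa [hBall] using h
      have h1 : 1 ≤ (t⁻¹)^r * t ^ hammingNorm (x+y+w) := by
        have := pow_le_pow_of_le_one ht0.le ht h
        calc (1:ℝ) = (t⁻¹)^r * t^r := by rw [← mul_pow, inv_mul_cancel₀ ht0.ne', one_pow]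
          _ ≤ _ := by gcongr
      have h2 := one_le_mul_of_one_le_of_one_le (one_le_mul_of_one_le_of_one_le hx' hy') h1
      refine h2.trans (le_of_eq ?_)
      ring
    · exact hnn
  calc _ ≤ ∑ x ∈ hBall A n r, ∑ y ∈ hBall A n r, M^2 * (t⁻¹)^r * ((∏ i, mu A d p (x i)) * ((∏ i, mu A d p (y i)) * t ^ hammingNorm (x + y + w))) :=
        Finset.sum_le_sum fun x hx => Finset.sum_le_sum fun y hy => step x hx y hy
    _ ≤ ∑ x : Fin n → A, ∑ y : Fin n → A, M^2 * (t⁻¹)^r * ((∏ i, mu A d p (x i)) * ((∏ i, mu A d p (y i)) * t ^ hammingNorm (x + y + w))) := by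
        have nn : ∀ x y : Fin n → A, 0 ≤ M^2 * (t⁻¹)^r * ((∏ i, mu A d p (x i)) * ((∏ i, mu A d p (y i)) * t ^ hammingNorm (x + y + w))) := by
          intro x y
          have := P0 x; have := P0 y
          positivity
        refine (Finset.sum_le_sum fun x hx => Finset.sum_le_univ_sum_of_nonneg (nn x)).trans ?_
        exact Finset.sum_le_univ_sum_of_nonneg fun x => Finset.sum_nonneg fun y _ => nn x y
    _ = M^2 * (t⁻¹)^r * ∏ i : Fin n, ∑ a : A, mu A d p a * ∑ b : A, mu A d p b * (if a + b + w i = 0 then 1 else t) := by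
        simp_rw [← Finset.mul_sum]
        congr 1
        rw [← sum_prod (fun i a => mu A d p a * ∑ b : A, mu A d p b * (if a + b + w i = 0 then 1 else t))]
        refine Finset.sum_congr rfl fun x _ => ?_
        rw [Finset.prod_mul_distrib]
        congr 1
        rw [← sum_prod (fun i b => mu A d p b * (if x i + b + w i = 0 then 1 else t))]
        refine Finset.sum_congr rfl fun y _ => ?_
        rw [Finset.prod_mul_distrib, pow_wt]
        rfl
    _ ≤ M^2 * (t⁻¹)^r * ∏ i : Fin n, (1 - (1 - t) * (d + γ)) := by
        gcongr with i
        · intro i _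
          refine Finset.sum_nonneg fun a _ => mul_nonneg (mu0 a) (Finset.sum_nonneg fun b _ => mul_nonneg (mu0 b) ?_)
          split_ifs <;> linarith
        · exact E_bound d p t γ hp hpd ht hγ (w i)
    _ = _ := by simp; ring

lemma tuple_bound (n r : ℕ) (M : ℝ)
    (hM : ∀ w : Fin n → A, (∑ x ∈ hBall A n r, ∑ y ∈ hBall A n r, if x + y + w ∈ hBall A n r then (1:ℝ) else 0) ≤ M) (m : ℕ) :
    ∀ w : Fin n → A, (((Finset.univ : Finset (Fin (m+2) → Fin n → A)).filter fun v =>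
      (∀ i, v i ∈ hBall A n r) ∧ (∑ i, v i) + w ∈ hBall A n r).card : ℝ) ≤ M * ((hBall A n r).card : ℝ)^m := by
  have key : ∀ (k : ℕ) (w : Fin n → A), (((Finset.univ : Finset (Fin (k+1) → Fin n → A)).filter fun v =>
      (∀ i, v i ∈ hBall A n r) ∧ (∑ i, v i) + w ∈ hBall A n r).card : ℝ) =
      ∑ x ∈ hBall A n r, (((Finset.univ : Finset (Fin k → Fin n → A)).filter fun v =>
      (∀ i, v i ∈ hBall A n r) ∧ (∑ i, v i) + (x + w) ∈ hBall A n r).card : ℝ) := by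
    intro k w
    simp_rw [Finset.card_filter]
    push_cast
    rw [← (Fin.consEquiv (fun _ => Fin n → A)).sum_comp, Fintype.sum_prod_type]
    rw [← Finset.sum_filter_add_sum_filter_not Finset.univ (fun x => x ∈ hBall A n r)]
    have z : ∑ x with x ∉ hBall A n r, ∑ y : Fin k → Fin n → A,
      (if (∀ i, (Fin.consEquiv (fun _ => Fin n → A)) (x, y) i ∈ hBall A n r) ∧
        (∑ i, (Fin.consEquiv (fun _ => Fin n → A)) (x, y) i) + w ∈ hBall A n r then (1:ℝ) else 0) = 0 := by
      refine Finset.sum_eq_zero fun x hx => Finset.sum_eq_zero fun y _ => ?_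
      rw [if_neg]
      rintro ⟨h, -⟩
      have := h 0
      simp [Fin.consEquiv] at this hx
      exact hx this
    rw [z, add_zero, Finset.filter_mem_eq_inter, Finset.univ_inter]
    refine Finset.sum_congr rfl fun x hx => Finset.sum_congr rfl fun y _ => ?_
    congr 1
    simp only [Fin.consEquiv, Equiv.coe_fn_mk, Fin.forall_fin_succ, Fin.sum_univ_succ, Fin.cons_zero, Fin.cons_succ]
    simp only [hx, true_and, eq_iff_iff]
    rw [show x + ∑ i, y i + w = ∑ i, y i + (x + w) by abel]
  induction m with
  | zero =>
    intro w
    rw [key]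
    simp_rw [key]
    refine le_trans (le_of_eq ?_) ((hM w).trans (by simp))
    refine Finset.sum_congr rfl fun x hx => Finset.sum_congr rfl fun y _ => ?_
    rw [show x + y + w = y + (x + w) by abel]
    by_cases h : y + (x+w) ∈ hBall A n r <;> simp [h]
  | succ m ih =>
    intro w
    rw [key]
    refine (Finset.sum_le_sum fun x _ => ih (x + w)).trans (le_of_eq ?_)
    simp
    ring

end

section
variable {A : Type} [Fintype A] [AddCommGroup A] [DecidableEq A]

lemma ball_drop (m l r : ℕ) :
    (hBall A (m + l) r).card ≤ (hBall A m r).card * Fintype.card A ^ l := by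
  have : Fintype.card A ^ l = (Finset.univ : Finset (Fin l → A)).card := by simp
  rw [this, ← Finset.card_product]
  refine Finset.card_le_card_of_injOn
    (fun x => (fun i => x (Fin.castAdd l i), fun i => x (Fin.natAdd m i))) ?_ ?_
  · intro x hx
    simp only [hBall, Finset.coe_filter, Finset.mem_univ, true_and, Set.mem_ofPred_eq] at hx
    simp only [hBall, Finset.coe_product, Finset.coe_univ, Set.mem_prod, Set.mem_univ, and_true,
      Finset.coe_filter, Finset.mem_univ, true_and, Set.mem_ofPred_eq]
    refine le_trans ?_ hx
    refine Finset.card_le_card_of_injOn (Fin.castAdd l) ?_ ?_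
    · intro i hi; simpa using hi
    · intro i _ j _ h; exact Fin.castAdd_injective _ _ h
  · intro x _ y _ h
    simp only [Prod.mk.injEq] at h
    funext i
    refine Fin.addCases (fun j => ?_) (fun j => ?_) i
    · exact congrFun h.1 j
    · exact congrFun h.2 j

lemma ball_step (m s : ℕ) (κ : ℝ) (hκ : (m : ℝ) * Fintype.card A ≤ κ * (s + 1)) :
    ((hBall A m (s + 1)).card : ℝ) ≤ (1 + κ) * (hBall A m s).card := by
  have h1 : (hBall A m (s+1)).card ≤ (hBall A m s).card + (hSph A m (s+1)).card := by
    refine le_trans (Finset.card_le_card ?_) (Finset.card_union_le _ _)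
    intro x
    simp only [hBall, hSph, Finset.mem_union, Finset.mem_filter, Finset.mem_univ, true_and]
    omega
  have h2 : (hSph A m (s+1)).card * (s+1) ≤ (hBall A m s).card * (m * Fintype.card A) := by
    have h3 : (hSph A m s).card ≤ (hBall A m s).card := by
      apply Finset.card_le_card
      intro y; simp only [hSph, hBall, Finset.mem_filter]; rintro ⟨a, b⟩; exact ⟨a, b.le⟩
    refine le_trans ?_ (Nat.mul_le_mul_right _ h3)
    rw [card_sph, card_sph]
    have := Nat.choose_succ_right_eq m s
    calc _ = (m.choose (s+1) * (s+1)) * ((Fintype.card A - 1)^s * (Fintype.card A - 1)) := by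
          rw [pow_succ]; ring
      _ = m.choose s * (Fintype.card A - 1)^s * ((m - s) * (Fintype.card A - 1)) := by
          rw [this]; ring
      _ ≤ _ := by gcongr <;> omega
  have h1' : ((hBall A m (s+1)).card : ℝ) ≤ (hBall A m s).card + (hSph A m (s+1)).card := by
    exact_mod_cast h1
  have h2' : ((hSph A m (s+1)).card : ℝ) * (s+1) ≤ (hBall A m s).card * (m * Fintype.card A) := by
    exact_mod_cast h2
  have h3 : ((hSph A m (s+1)).card : ℝ) * (s+1) ≤ ((hBall A m s).card * κ) * (s+1) := by
    refine h2'.trans ?_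
    rw [mul_assoc]
    gcongr
  have h4 := le_of_mul_le_mul_right h3 (by positivity)
  linarith

lemma ball_steps (m s l : ℕ) (κ : ℝ) (hκ0 : 0 ≤ κ)
    (hκ : (m : ℝ) * Fintype.card A ≤ κ * (s + 1)) :
    ((hBall A m (s + l)).card : ℝ) ≤ (1 + κ) ^ l * (hBall A m s).card := by
  induction l with
  | zero => simp
  | succ l ih =>
    have h := ball_step (A := A) m (s + l) κ (by
      refine hκ.trans ?_
      gcongr
      simp)
    rw [← add_assoc]
    refine h.trans ?_
    rw [pow_succ, mul_comm _ (1 + κ), mul_assoc]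
    gcongr

end

section
variable {F : Type} [Field F] [Fintype F] [DecidableEq F]

/-- correction block -/
noncomputable def corr {m l : ℕ} (u : Fin l → Fin m → F × F) (j k : Fin l) : F × F :=
  (if k = j then 1 else 0, if k < j then - sympInner (u k) (u j) else 0)

lemma inner_append {m l : ℕ} (x x' : Fin m → F × F) (y y' : Fin l → F × F) :
    sympInner (Fin.append x y) (Fin.append x' y') = sympInner x x' + sympInner y y' := by
  simp only [sympInner, Fin.sum_univ_add, Fin.append_left, Fin.append_right]

lemma inner_swap {m : ℕ} (x y : Fin m → F × F) : sympInner x y = - sympInner y x := by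
  simp only [sympInner, ← Finset.sum_neg_distrib]
  refine Finset.sum_congr rfl fun i _ => by ring

lemma inner_self {m : ℕ} (x : Fin m → F × F) : sympInner x x = 0 := by
  simp only [sympInner]
  refine Finset.sum_eq_zero fun i _ => by ring

lemma inner_corr {m l : ℕ} (u : Fin l → Fin m → F × F) (i j : Fin l) :
    sympInner (corr u i) (corr u j) = - sympInner (u i) (u j) := by
  have : sympInner (corr u i) (corr u j) = (corr u j i).2 - (corr u i j).2 := by
    unfold sympInner
    have h1 : ∀ k, (corr u i k).1 * (corr u j k).2 - (corr u i k).2 * (corr u j k).1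
        = (if k = i then (corr u j k).2 else 0) - (if k = j then (corr u i k).2 else 0) := by
      intro k
      rw [show (corr u i k).1 = if k = i then 1 else 0 from rfl,
        show (corr u j k).1 = if k = j then 1 else 0 from rfl]
      simp
    simp_rw [h1, Finset.sum_sub_distrib]
    simp
  rw [this]
  simp only [corr]
  rcases lt_trichotomy i j with h | h | h
  · simp [h, h.not_gt]
  · subst h; simp [inner_self]
  · simp [h, h.not_gt]; exact inner_swap _ _

lemma norm_append {m l : ℕ} (x : Fin m → F × F) (y : Fin l → F × F) :
    hammingNorm (Fin.append x y) ≤ hammingNorm x + l := by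
  simp only [hammingNorm, Finset.card_filter, Fin.sum_univ_add, Fin.append_left, Fin.append_right]
  gcongr
  rw [← Finset.card_filter]
  exact (Finset.card_le_univ _).trans (by simp)

lemma good_lower (m l s : ℕ) :
    (hBall (F × F) m s).card ^ l ≤
      ((Finset.univ : Finset (Fin l → Fin (m + l) → F × F)).filter fun v =>
          (∀ i, v i ∈ sympBall F (m + l) (s + l)) ∧ LinearIndependent F v ∧
            ∀ i j, sympInner (v i) (v j) = 0).card := by
  have : (hBall (F × F) m s).card ^ l =
      (Fintype.piFinset fun _ : Fin l => hBall (F × F) m s).card := by simp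
  rw [this]
  refine Finset.card_le_card_of_injOn (fun u i => Fin.append (u i) (corr u i)) ?_ ?_
  · intro u hu
    have hu : ∀ i, u i ∈ hBall (F × F) m s := by simpa using hu
    simp only [Finset.coe_filter, Finset.mem_univ, true_and, Set.mem_ofPred_eq]
    refine ⟨fun i => ?_, ?_, fun i j => ?_⟩
    · have := hu i
      simp only [hBall, Finset.mem_filter, Finset.mem_univ, true_and] at this
      refine Finset.mem_filter.2 ⟨Finset.mem_univ _, ?_⟩
      exact (norm_append (u i) (corr u i)).trans (by omega)
    · rw [Fintype.linearIndependent_iff]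
      intro g hg i
      have := congrArg Prod.fst (congrFun hg (Fin.natAdd m i))
      simpa [corr, Finset.sum_apply, Prod.fst_sum] using this
    · rw [inner_append, inner_corr]; ring
  · intro u _ u' _ h
    funext i k
    have := congrFun (congrFun h i) (Fin.castAdd l k)
    simpa using this

end
end SympAux


lemma SympAux.chernoff (n r : ℕ) (d γ s : ℝ) (hn : 0 < n) (hd : d = r / n) (hγ : 0 < γ)
    (hdγ : d + γ ≤ 1) (hs : s = γ / 2) :
    ((Real.exp (-s))⁻¹)^r * (1 - (1 - Real.exp (-s)) * (d + γ))^n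
      ≤ Real.exp (-(γ^2/4) * n) := by
  have hn' : (0:ℝ) < n := by exact_mod_cast hn
  have hd0 : 0 ≤ d := by rw [hd]; positivity
  have hγ1 : γ ≤ 1 := by linarith
  have h1 : Real.exp (-s) ≤ 1 - s + s^2 := by
    have := Real.abs_exp_sub_one_sub_id_le (x := -s) (by rw [abs_neg, abs_le]; constructor <;> linarith)
    have := (abs_le.1 this).2
    nlinarith
  have ht1 : Real.exp (-s) ≤ 1 := Real.exp_le_one_iff.2 (by linarith)
  have ht0 := Real.exp_pos (-s)
  have hu : (1 - Real.exp (-s)) * (d + γ) ≤ 1 := by nlinarith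
  have h2 : (1 - (1 - Real.exp (-s)) * (d + γ))^n ≤ (Real.exp (-((1 - Real.exp (-s)) * (d + γ))))^n := by
    apply pow_le_pow_left₀ (by linarith)
    have := Real.add_one_le_exp (-((1 - Real.exp (-s)) * (d + γ)))
    linarith
  have hr : (r:ℝ) = d * n := by rw [hd]; field_simp
  calc _ ≤ ((Real.exp (-s))⁻¹)^r * (Real.exp (-((1 - Real.exp (-s)) * (d + γ))))^n := by gcongr
    _ = Real.exp ((s * d - (1 - Real.exp (-s)) * (d + γ)) * n) := by
      rw [← Real.exp_neg, ← Real.exp_nat_mul, ← Real.exp_nat_mul, ← Real.exp_add, hr]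
      congr 1; ring
    _ ≤ _ := by
      apply Real.exp_le_exp.2
      apply mul_le_mul_of_nonneg_right _ hn'.le
      have h3 : (s - s^2) * (d + γ) ≤ (1 - Real.exp (-s)) * (d + γ) :=
        mul_le_mul_of_nonneg_right (by linarith) (by linarith)
      have h4 : s^2 * (d + γ) ≤ s^2 * 1 := mul_le_mul_of_nonneg_left hdγ (by positivity)
      rw [hs] at *
      nlinarith

lemma SympAux.eventually_large (δ γ : ℝ) (hδ : 0 < δ) (hγ : 0 < γ) : ∃ N : ℕ, ∀ n : ℕ, N ≤ n →
    1 ≤ n ∧ δ / 4 * n + 1 + Real.sqrt n ≤ δ * n ∧ ((n:ℝ) + 1)^2 ≤ Real.exp (γ^2/16 * n) ∧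
    δ / 2 * n + 1 ≤ δ * n ∧ Real.sqrt n ≤ n := by
  have hc : 0 < γ^2/16 := by positivity
  have t1 : Filter.Tendsto (fun n : ℕ => (n:ℝ)) Filter.atTop Filter.atTop :=
    tendsto_natCast_atTop_atTop
  obtain ⟨N1, hN1⟩ := Filter.eventually_atTop.1 (t1.eventually_ge_atTop (4/δ + 16/δ^2 + 1))
  obtain ⟨N2, hN2⟩ := Filter.eventually_atTop.1
    (t1.eventually_ge_atTop (24 / (γ^2/16)^3 + 1))
  refine ⟨max (max N1 N2) 1, fun n hn => ?_⟩
  have hn1 := hN1 n (by omega)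
  have hn2 := hN2 n (by omega)
  have hn0 : 1 ≤ n := by omega
  have hnR : (1:ℝ) ≤ n := by exact_mod_cast hn0
  have hs := Real.sq_sqrt (show (0:ℝ) ≤ n by linarith)
  have hs0 := Real.sqrt_nonneg (n:ℝ)
  have e1 : 4 ≤ δ * n := by
    have : 4/δ ≤ n := by have : 0 < 16/δ^2 := by positivity
                         linarith
    rw [div_le_iff₀ hδ] at this; linarith
  have e2 : 4 ≤ δ * Real.sqrt n := by
    have h : 16/δ^2 ≤ n := by have : 0 < 4/δ := by positivity
                              linarith
    rw [div_le_iff₀ (by positivity)] at h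
    have h' : (4:ℝ)^2 ≤ (δ * Real.sqrt n)^2 := by rw [mul_pow, hs]; linarith
    exact le_of_sq_le_sq h' (by positivity)
  refine ⟨hn0, ?_, ?_, by linarith, ?_⟩
  · nlinarith
  · set c := γ^2/16 with hcdef
    have h3 : (c * n)^3 / 6 ≤ Real.exp (c * n) := by
      have := Real.pow_div_factorial_le_exp (c * n) (by positivity) 3
      simpa [Nat.factorial] using this
    refine le_trans ?_ h3
    have h4 : 24 ≤ c^3 * n := by
      have : 24 / c^3 ≤ n := by linarith
      rw [div_le_iff₀ (by positivity)] at this; linarith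
    have h5 : ((n:ℝ)+1)^2 ≤ 4 * n^2 := by nlinarith
    have h6 : 24 * (n:ℝ)^2 ≤ (c^3 * n) * n^2 := by gcongr
    have h7 : (c * n)^3 = (c^3 * n) * n^2 := by ring
    rw [h7]; linarith
  · rw [Real.sqrt_le_left (by linarith)]; nlinarith

lemma SympAux.bad_subset {F : Type} [Field F] [Fintype F] [DecidableEq F] (n r k : ℕ)
    (good : Finset (Fin k → Fin n → F × F))
    (hg : ∀ v ∈ good, ∀ i, v i ∈ sympBall F n r) :
    (good.filter fun v => (∑ i, v i) ∈ sympBall F n r).card ≤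
      ((Finset.univ : Finset (Fin k → Fin n → F × F)).filter fun v =>
        (∀ i, v i ∈ SympAux.hBall (F × F) n r) ∧
          (∑ i, v i) + 0 ∈ SympAux.hBall (F × F) n r).card := by
  have e : sympBall F n r = SympAux.hBall (F × F) n r := rfl
  rw [e] at *
  apply Finset.card_le_card
  intro v hv
  rw [Finset.mem_filter] at hv
  rw [Finset.mem_filter, add_zero]
  exact ⟨Finset.mem_univ _, hg v hv.1, hv.2⟩

set_option maxHeartbeats 4000000 in
/-- For a prime power `q` (realized as the cardinality of a finite field `F`)
and a constant `δ ∈ (0, 1 - 1/q²)`, there exist constants `c'' > 0` and `h'_δ ∈ (0,1)` such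
that for all sufficiently large `n` and every `ℓ` with `2 ≤ ℓ ≤ c''√n`: the set of `ℓ`-tuples
of vectors of `B_q^S(2n, ⌊δn⌋)` that are linearly independent and pairwise symplectically
orthogonal is nonempty, and if a tuple is drawn uniformly from it, the probability that
`v_1 + ⋯ + v_ℓ ∈ B_q^S(2n, ⌊δn⌋)` is at most `2^{-h'_δ n}` (expressed by counting). -/
theorem symp_orth_tuple_sum_escape
    (q : ℕ) (F : Type) [Field F] [Fintype F] [DecidableEq F] (hF : Fintype.card F = q)
    (δ : ℝ) (hδ0 : 0 < δ) (hδ1 : δ < 1 - 1 / (q : ℝ) ^ 2) :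
    ∃ c'' : ℝ, 0 < c'' ∧ ∃ h' : ℝ, 0 < h' ∧ h' < 1 ∧ ∃ N : ℕ, ∀ n : ℕ, N ≤ n →
      ∀ ℓ : ℕ, 2 ≤ ℓ → (ℓ : ℝ) ≤ c'' * Real.sqrt n →
      ∀ good : Finset (Fin ℓ → Fin n → F × F),
        good = ((Finset.univ : Finset (Fin ℓ → Fin n → F × F)).filter fun v =>
          (∀ i, v i ∈ sympBall F n ⌊δ * (n : ℝ)⌋₊) ∧ LinearIndependent F v ∧
            ∀ i j, sympInner (v i) (v j) = 0) →
        good.Nonempty ∧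
          ((good.filter fun v => (∑ i, v i) ∈ sympBall F n ⌊δ * (n : ℝ)⌋₊).card : ℝ) ≤
            (2 : ℝ) ^ (-(h' * (n : ℝ))) * (good.card : ℝ) := by
  have hq2 : 2 ≤ q := by rw [← hF]; exact Fintype.one_lt_card
  obtain ⟨Q, hQ⟩ : ∃ Q : ℝ, Q = (q:ℝ)^2 := ⟨_, rfl⟩
  have hQ4 : 4 ≤ Q := by
    have : (2:ℝ) ≤ q := by exact_mod_cast hq2
    rw [hQ]; nlinarith
  have hcard : (Fintype.card (F × F) : ℝ) = Q := by
    rw [Fintype.card_prod, hF, hQ]; push_cast; ring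
  rw [← hQ] at hδ1
  obtain ⟨p0, hp0⟩ : ∃ p0 : ℝ, p0 = δ / (Q - 1) := ⟨_, rfl⟩
  have hQ1 : 0 < Q - 1 := by linarith
  have hp0Q : p0 * (Q - 1) = δ := by rw [hp0]; field_simp
  have hgap : 0 < 1 - δ - p0 := by
    have h1 : δ * Q < Q - 1 := by
      have := mul_lt_mul_of_pos_right hδ1 (show 0 < Q by linarith)
      rwa [sub_mul, one_mul, one_div, inv_mul_cancel₀ (by linarith)] at this
    have h2 : 0 < (1 - δ - p0) * (Q - 1) := by nlinarith
    exact (mul_pos_iff_of_pos_right hQ1).1 h2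
  have hp0pos : 0 < p0 := by rw [hp0]; positivity
  obtain ⟨γ, hγ⟩ : ∃ γ : ℝ, γ = δ / 2 * (1 - δ - p0) := ⟨_, rfl⟩
  have hγ0 : 0 < γ := by rw [hγ]; positivity
  have hδlt : δ < 1 := by linarith
  have hγδ : δ + γ ≤ 1 := by rw [hγ]; nlinarith
  have hγ1 : γ < 1 := by linarith
  obtain ⟨κ, hκ⟩ : ∃ κ : ℝ, κ = 4 * Q / δ := ⟨_, rfl⟩
  have hκ0 : 0 < κ := by rw [hκ]; positivity
  obtain ⟨L, hL⟩ : ∃ L : ℝ, L = Q * (1 + κ) := ⟨_, rfl⟩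
  have hL1 : 1 ≤ L := by rw [hL]; nlinarith
  obtain ⟨N, hN⟩ := SympAux.eventually_large δ γ hδ0 hγ0
  refine ⟨γ / (4 * L), by positivity, γ^2/8, by positivity, by nlinarith, N, ?_⟩
  intro n hn ℓ hℓ hℓn good hgood
  obtain ⟨hn1, hr4, hpoly, hr2, hsq⟩ := hN n hn
  have hnR : (1:ℝ) ≤ n := by exact_mod_cast hn1
  have hc1 : γ / (4 * L) ≤ 1 := by rw [div_le_one (by positivity)]; linarith
  have hℓs : (ℓ:ℝ) ≤ Real.sqrt n := hℓn.trans (by nlinarith [Real.sqrt_nonneg (n:ℝ)])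
  obtain ⟨r, hr⟩ : ∃ r : ℕ, r = ⌊δ * (n:ℝ)⌋₊ := ⟨_, rfl⟩
  rw [← hr] at hgood ⊢
  have hrle : (r:ℝ) ≤ δ * n := by rw [hr]; exact Nat.floor_le (by positivity)
  have hrge : δ * n < r + 1 := by rw [hr]; exact Nat.lt_floor_add_one _
  have hrn : r < n := by
    have : (r:ℝ) < n := by nlinarith
    exact_mod_cast this
  have hrpos : 0 < r := by
    have : (0:ℝ) < r := by nlinarith
    exact_mod_cast this
  obtain ⟨m, hm⟩ : ∃ m, n = m + ℓ := ⟨n - ℓ, by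
    have : ℓ ≤ n := by exact_mod_cast hℓs.trans hsq
    omega⟩
  obtain ⟨s, hs⟩ : ∃ s, r = s + ℓ := ⟨r - ℓ, by
    have : (ℓ:ℝ) ≤ r := by nlinarith
    have : ℓ ≤ r := by exact_mod_cast this
    omega⟩
  have hsR : (s:ℝ) = r - ℓ := by rw [hs]; push_cast; ring
  have hmn : (m:ℝ) ≤ n := by rw [hm]; push_cast; linarith [(Nat.cast_nonneg ℓ : (0:ℝ) ≤ ℓ)]
  obtain ⟨b, hb⟩ : ∃ b : ℝ, b = ((SympAux.hBall (F × F) n r).card : ℝ) := ⟨_, rfl⟩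
  obtain ⟨b', hb'⟩ : ∃ b' : ℝ, b' = ((SympAux.hBall (F × F) m s).card : ℝ) := ⟨_, rfl⟩
  have hb'1 : 1 ≤ b' := by
    rw [hb']
    have : 0 < (SympAux.hBall (F × F) m s).card :=
      Finset.card_pos.2 ⟨0, by simp [SympAux.hBall]⟩
    exact_mod_cast this
  have hb0 : 0 ≤ b := by rw [hb]; positivity
  -- lower bound on the good tuples
  have hlow : b' ^ ℓ ≤ (good.card : ℝ) := by
    rw [hb', hgood]
    subst hm
    rw [hs]
    exact_mod_cast SympAux.good_lower (F := F) m ℓ s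
  have hbb : b ≤ L ^ ℓ * b' := by
    have h1 : b ≤ ((SympAux.hBall (F × F) m r).card : ℝ) * Q ^ ℓ := by
      rw [hb, ← hcard]
      have := SympAux.ball_drop (A := F × F) m ℓ r
      rw [← hm] at this
      exact_mod_cast this
    have h2 := SympAux.ball_steps (A := F × F) m s ℓ κ hκ0.le (by
      rw [hcard, hκ, hsR]
      have : δ / 4 * n ≤ (r:ℝ) - ℓ + 1 := by linarith
      calc (m:ℝ) * Q ≤ n * Q := by gcongr
        _ = 4 * Q / δ * (δ / 4 * n) := by field_simp
        _ ≤ _ := by gcongr)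
    rw [← hs, ← hb'] at h2
    calc b ≤ _ := h1
      _ ≤ ((1 + κ) ^ ℓ * b') * Q ^ ℓ := by gcongr
      _ = _ := by rw [hL, mul_pow]; ring
  -- upper bound on the bad tuples
  obtain ⟨d, hd⟩ : ∃ d : ℝ, d = r / n := ⟨_, rfl⟩
  have hdδ : d ≤ δ := by rw [hd, div_le_iff₀ (by linarith)]; exact hrle
  have hd2 : δ / 2 ≤ d := by rw [hd, le_div_iff₀ (by linarith)]; linarith
  obtain ⟨p, hp⟩ : ∃ p : ℝ, p = d / (Q - 1) := ⟨_, rfl⟩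
  have hd0 : 0 < d := by linarith
  have hpp0 : p ≤ p0 := by rw [hp, hp0]; gcongr
  have hpnn : 0 ≤ p := by rw [hp]; positivity
  have hpQ : p * ((Fintype.card (F × F) : ℝ) - 1) = d := by rw [hcard, hp]; field_simp
  have hγd : γ ≤ d * (1 - d - p) := by
    rw [hγ]
    apply mul_le_mul hd2 (by linarith) hgap.le hd0.le
  have hpair := SympAux.pair_bound (A := F × F) n r hrpos hrn d p (Real.exp (-(γ/2))) γ hd hpnn hpQ
    (by linarith) (Real.exp_pos _) (Real.exp_le_one_iff.2 (by linarith)) hγd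
  have hch := SympAux.chernoff n r d γ (γ/2) (by omega) hd hγ0 (by linarith) rfl
  obtain ⟨k, hk⟩ : ∃ k, ℓ = k + 2 := ⟨ℓ - 2, by omega⟩
  have hbad : ((good.filter fun v => (∑ i, v i) ∈ sympBall F n r).card : ℝ) ≤
      ((n + 1) * b)^2 * Real.exp (-(γ^2/4) * n) * b ^ k := by
    have ht := SympAux.tuple_bound (A := F × F) n r (((n + 1) * b)^2 * Real.exp (-(γ^2/4) * n))
      (fun w => (hpair w).trans (by rw [← hb]; gcongr)) k 0
    rw [← hb] at ht
    refine le_trans ?_ ht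
    subst hk
    refine Nat.cast_le.2 (SympAux.bad_subset n r (k + 2) good ?_)
    intro v hv
    rw [hgood, Finset.mem_filter] at hv
    exact hv.2.1
  have hgpos : (0:ℝ) < good.card := lt_of_lt_of_le (by positivity) hlow
  refine ⟨Finset.card_pos.1 (by exact_mod_cast hgpos), hbad.trans ?_⟩
  have hLL : (L ^ ℓ) ^ ℓ ≤ Real.exp (γ^2/16 * n) := by
    have h1 : L ≤ Real.exp L := by linarith [Real.add_one_le_exp L]
    calc (L ^ ℓ) ^ ℓ ≤ ((Real.exp L)^ℓ)^ℓ := by gcongr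
      _ = Real.exp (ℓ * (ℓ * L)) := by rw [← Real.exp_nat_mul, ← Real.exp_nat_mul]
      _ ≤ _ := by
        apply Real.exp_le_exp.2
        have h2 : (ℓ:ℝ) * ℓ ≤ (γ / (4 * L))^2 * n := by
          calc (ℓ:ℝ) * ℓ ≤ (γ / (4 * L) * Real.sqrt n) * (γ / (4 * L) * Real.sqrt n) := by gcongr
            _ = (γ / (4 * L))^2 * (Real.sqrt n ^ 2) := by ring
            _ = _ := by rw [Real.sq_sqrt (by linarith)]
        calc (ℓ:ℝ) * (ℓ * L) = (ℓ * ℓ) * L := by ring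
          _ ≤ ((γ / (4 * L))^2 * n) * L := by gcongr
          _ = (γ^2/16 * n) / L := by field_simp; ring
          _ ≤ _ := div_le_self (by positivity) hL1
  have hbℓ : b ^ ℓ ≤ Real.exp (γ^2/16 * n) * good.card := by
    calc b ^ ℓ ≤ (L ^ ℓ * b') ^ ℓ := by gcongr
      _ = (L ^ ℓ) ^ ℓ * b' ^ ℓ := by rw [mul_pow]
      _ ≤ _ := by gcongr
  calc ((n + 1) * b)^2 * Real.exp (-(γ^2/4) * n) * b ^ k
      = ((n:ℝ) + 1)^2 * Real.exp (-(γ^2/4) * n) * b ^ ℓ := by rw [hk]; ring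
    _ ≤ Real.exp (γ^2/16 * n) * Real.exp (-(γ^2/4) * n) * (Real.exp (γ^2/16 * n) * good.card) := by
        gcongr
    _ = Real.exp (-(γ^2/8 * n)) * good.card := by
        rw [← mul_assoc, ← Real.exp_add, ← Real.exp_add]
        congr 2; ring
    _ ≤ _ := by
        gcongr
        rw [Real.rpow_def_of_pos (by norm_num)]
        apply Real.exp_le_exp.2
        have : Real.log 2 ≤ 1 := by linarith [Real.log_two_lt_d9]
        have h0 : 0 ≤ γ^2/8 * n := by positivity
        nlinarith
end
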